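/- Let n ≥ 2 and a = (a_1,…,a_n), b = (b_1,…,b_n) ∈ ℂ^n with every a_j and b_k purely imaginary, and let s ∈ ℂ with Re(s) > 0. Then J_{0,n;a,b}(s) = [∏_{j=1}^{n} Γ_ℝ(s+a_j+b_n)·Γ_ℝ(s+a_j−b_n)]·J_{1,n−1;a,b̃}(s), where b̃ = (b_1,…,b_{n−1}). -/

import Mathlib

open MeasureTheory Complex

noncomputable section

/-- `Γ_ℝ(s) = π^{-s/2} Γ(s/2)`. -/
def GammaR (s : ℂ) : ℂ := (Real.pi : ℂ) ^ (-s / 2) * Complex.Gamma (s / 2)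

/-- Modified Bessel function of the second kind, via its integral representation. -/
def BesselK (ν : ℂ) (y : ℝ) : ℂ :=
  (1 / 2) * ∫ t in Set.Ioi (0 : ℝ),
    Complex.exp (-((y : ℂ) / 2) * ((t : ℂ) + 1 / (t : ℂ))) * (t : ℂ) ^ ν / (t : ℂ)

/-- Extend a finite real tuple to `ℕ`, defaulting to `1`. -/
def extR {k : ℕ} (t : Fin k → ℝ) : ℕ → ℝ := fun i => if h : i < k then t ⟨i, h⟩ else 1

/-- Extend a finite real tuple to `ℕ`, defaulting to `0`. -/
def extR0 {k : ℕ} (t : Fin k → ℝ) : ℕ → ℝ := fun i => if h : i < k then t ⟨i, h⟩ else 0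

/-- The positive orthant. -/
def posSet (k : ℕ) : Set (Fin k → ℝ) := {t | ∀ j, 0 < t j}

/-- `|a| = a_1 + ⋯ + a_n` (0-based indexing). -/
def sumA (n : ℕ) (a : ℕ → ℂ) : ℂ := ∑ j ∈ Finset.range n, a j

/-- `ã_j = a_{j+1} + a_1/(n-1)` (0-based indexing). -/
def tildeA (n : ℕ) (a : ℕ → ℂ) : ℕ → ℂ := fun j => a (j + 1) + a 0 / ((n : ℂ) - 1)

/-- The normalized radial part `Ŵ^A_{n,a}` of the class one `GL_n(ℝ)` Whittaker function,
as a function of `(y_1,…,y_{n-1})` (0-based indexing). -/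
def WhittAr : ℕ → (ℕ → ℂ) → (ℕ → ℝ) → ℂ
  | 0, _, _ => 1
  | 1, _, _ => 1
  | 2, a, y => 2 * ((y 0 : ℂ) ^ ((a 0 + a 1) / 2)) *
      BesselK ((a 0 - a 1) / 2) (2 * Real.pi * y 0)
  | (n + 3), a, y =>
      ∫ t in posSet (n + 2),
        WhittAr (n + 2) (tildeA (n + 3) a)
            (fun j => y (j + 1) * Real.sqrt (extR t (j + 1) / extR t j)) *
          (∏ j ∈ Finset.range (n + 2),
            Complex.exp (((-(Real.pi * y j) ^ 2 * extR t j - 1 / extR t j : ℝ) : ℂ)) *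
              ((Real.pi * y j : ℝ) : ℂ) ^ ((((n + 2 - j : ℕ) : ℂ) * a 0) / ((n + 2 : ℕ) : ℂ)) *
              ((extR t j : ℝ) : ℂ) ^ ((((n + 3 : ℕ) : ℂ) * a 0) / (2 * ((n + 2 : ℕ) : ℂ)))) *
          ((Real.pi * extR t (n + 1) : ℝ) : ℂ) ^ (-(sumA (n + 3) a) / 2) *
          (∏ j ∈ Finset.range (n + 2), ((extR t j : ℝ) : ℂ))⁻¹

/-- `Ŵ^A_{n,a}` as a function of the full tuple `(y_1,…,y_n)`. -/
def WhittAhat (n : ℕ) (a : ℕ → ℂ) (y : ℕ → ℝ) : ℂ :=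
  ((y (n - 1) : ℝ) : ℂ) ^ sumA n a * WhittAr n a y

/-- The Mellin transform `U_{n,a}` (0-based: `s j` stands for `s_{j+1}`). -/
def Ufun (n : ℕ) (a : ℕ → ℂ) (s : ℕ → ℂ) : ℂ :=
  ∫ y in posSet (n - 1),
    WhittAr n a (extR y) *
      ∏ j ∈ Finset.range (n - 1), ((extR y j : ℝ) : ℂ) ^ s j / ((extR y j : ℝ) : ℂ)

/-- The normalized radial part `Ŵ^B_{n,b}` of the class one `SO_{2n+1}(ℝ)` Whittaker function. -/
def WhittBr : ℕ → (ℕ → ℂ) → (ℕ → ℝ) → ℂ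
  | 0, _, _ => 1
  | 1, b, y => 2 * BesselK (b 0 / 2) (2 * Real.pi * y 0)
  | (n + 2), b, y =>
      ∫ p in (posSet (n + 2) ×ˢ posSet (n + 1)),
        WhittBr (n + 1) b
            (fun j =>
              if j < n then
                y (j + 1) *
                  Real.sqrt (extR p.1 (j + 1) * extR p.2 (j + 1) /
                    (extR p.1 (j + 2) * extR p.2 j))
              else y (n + 1) * Real.sqrt (extR p.1 (n + 1) / extR p.2 n)) *
          (∏ j ∈ Finset.range (n + 2),
            Complex.exp (((-(Real.pi * y j) ^ 2 * extR p.1 j - 1 / extR p.1 j : ℝ) : ℂ)) *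
              ((Real.pi * y j : ℝ) : ℂ) ^ b (n + 1)) *
          (∏ j ∈ Finset.range (n + 1),
            Complex.exp (((-(Real.pi * y j) ^ 2 * (extR p.1 j / extR p.1 (j + 1)) * extR p.2 j -
                  1 / extR p.2 j : ℝ) : ℂ)) *
              ((extR p.1 (j + 1) * extR p.2 j : ℝ) : ℂ) ^ (b (n + 1) / 2)) *
          ((extR p.1 0 : ℝ) : ℂ) ^ b (n + 1) *
          (∏ j ∈ Finset.range (n + 1), ((extR p.2 j : ℝ) : ℂ))⁻¹ *
          (∏ j ∈ Finset.range (n + 2), ((extR p.1 j : ℝ) : ℂ))⁻¹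

/-- The Mellin transform `V_{n,b}` (0-based: `s j` stands for `s_{j+1}`). -/
def Vfun (n : ℕ) (b : ℕ → ℂ) (s : ℕ → ℂ) : ℂ :=
  ∫ y in posSet n,
    WhittBr n b (extR y) *
      ∏ j ∈ Finset.range n, ((extR y j : ℝ) : ℂ) ^ s j / ((extR y j : ℝ) : ℂ)

/-- Integral over the vertical line `Re z = c`, i.e. `i·∫_ℝ f(c+it) dt`. -/
def VInt (c : ℝ) (f : ℂ → ℂ) : ℂ := Complex.I * ∫ t : ℝ, f (c + t * Complex.I)

/-- Iterated integral over `k` vertical lines with abscissas `c 0, …, c (k-1)`;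
the integrand is fed the contour points as a 0-based sequence. -/
def VIntK (k : ℕ) (c : ℕ → ℝ) (f : (ℕ → ℂ) → ℂ) : ℂ :=
  Complex.I ^ k * ∫ t : Fin k → ℝ, f (fun i => (c i : ℂ) + (extR0 t i : ℝ) * Complex.I)



/-- The archimedean `SO_{2n+1} × GL_n` zeta integral in torus coordinates. -/
def zetaJ0 (n : ℕ) (a b : ℕ → ℂ) (s : ℂ) : ℂ :=
  (2 : ℂ) ^ n * ∫ y in posSet n,
    WhittAhat n a (extR y) * WhittBr n b (extR y) *
      ∏ j ∈ Finset.range n,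
        ((extR y j : ℝ) : ℂ) ^ (((j + 1 : ℕ) : ℂ) * s) / ((extR y j : ℝ) : ℂ)

/-- The archimedean `SO_{2n+1} × GL_{n+1}` zeta integral in torus coordinates. -/
def zetaJ1 (n : ℕ) (a b : ℕ → ℂ) (s : ℂ) : ℂ :=
  (2 : ℂ) ^ n * ∫ y in posSet n,
    WhittAhat (n + 1) a (extR y) * WhittBr n b (extR y) *
      ∏ j ∈ Finset.range n,
        ((extR y j : ℝ) : ℂ) ^ (((j + 1 : ℕ) : ℂ) * s) / ((extR y j : ℝ) : ℂ)

/-! In logarithmic coordinates the `GL_n` Whittaker function is an iterated integral of Givental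
kernels, and the two groups of integration variables in the recursion for `SO_{2n+1}` become two
consecutive kernels of the Baxter `Q`-operator of the open Toda chain, with spectral parameters
`(s ± b_n) / 2` once the factor `∏ y_j^{js}` is absorbed. A reflection of the intermediate variables
shows that the Baxter operator intertwines the Givental kernels up to one Gamma factor; by induction
on the rank, a `GL_n` Whittaker function is an eigenfunction of the Baxter operator, with eigenvalue
a product of `n` Gamma functions. Applying the two kernels in turn produces the `2n` factors `Γ_ℝ`
and leaves the zeta integral for `SO_{2n-1}`. Interchanging the integrals is allowed because the
iterated integral of absolute values satisfies the same eigenfunction identity, and the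
`SO_{2n-1}` Whittaker function is bounded by an arbitrarily small exponential. -/

section LogCoordinates

variable {E : Type*} [NormedAddCommGroup E] [NormedSpace ℝ E] {k l : ℕ}

/-- The coordinatewise exponential: logarithmic coordinates on the positive orthant. -/
def expPi (τ : Fin k → ℝ) : Fin k → ℝ := fun j => Real.exp (τ j)

lemma expPi_injective : Function.Injective (expPi (k := k)) :=
  fun _ _ h => funext fun j => Real.exp_injective (congrFun h j)

lemma range_expPi : Set.range (expPi (k := k)) = posSet k := by
  ext t
  refine ⟨?_, fun ht => ⟨fun j => Real.log (t j), funext fun j => Real.exp_log (ht j)⟩⟩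
  rintro ⟨τ, rfl⟩ j
  exact Real.exp_pos _

/-- The derivative of `expPi` at `τ`, a diagonal map. -/
def expPiDeriv (τ : Fin k → ℝ) : (Fin k → ℝ) →L[ℝ] (Fin k → ℝ) :=
  ContinuousLinearMap.pi fun j => Real.exp (τ j) • ContinuousLinearMap.proj j

lemma hasFDerivAt_expPi (τ : Fin k → ℝ) : HasFDerivAt expPi (expPiDeriv τ) τ :=
  hasFDerivAt_pi'.2 fun j => (Real.hasDerivAt_exp (τ j)).comp_hasFDerivAt τ
    (ContinuousLinearMap.proj (R := ℝ) (φ := fun _ : Fin k => ℝ) j).hasFDerivAt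

lemma det_expPiDeriv (τ : Fin k → ℝ) :
    LinearMap.det (expPiDeriv τ : (Fin k → ℝ) →ₗ[ℝ] (Fin k → ℝ)) = Real.exp (∑ j, τ j) := by
  have hdiag : (expPiDeriv τ : (Fin k → ℝ) →ₗ[ℝ] (Fin k → ℝ)) =
      Matrix.toLin' (Matrix.diagonal fun j => Real.exp (τ j)) := by
    ext v j
    simp [expPiDeriv, Matrix.mulVec_diagonal, Pi.single_apply]
  rw [hdiag, LinearMap.det_toLin', Matrix.det_diagonal, Real.exp_sum]

lemma setIntegral_posSet (f : (Fin k → ℝ) → E) :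
    ∫ t in posSet k, f t = ∫ τ : Fin k → ℝ, Real.exp (∑ j, τ j) • f (expPi τ) := by
  rw [← range_expPi, ← Set.image_univ, integral_image_eq_integral_abs_det_fderiv_smul volume
    MeasurableSet.univ (fun τ _ => (hasFDerivAt_expPi τ).hasFDerivWithinAt)
    expPi_injective.injOn, setIntegral_univ]
  simp only [ContinuousLinearMap.det, det_expPiDeriv, Real.abs_exp]

lemma setIntegral_posSet_prod (f : (Fin k → ℝ) × (Fin l → ℝ) → E) :
    ∫ p in posSet k ×ˢ posSet l, f p =
      ∫ p : (Fin k → ℝ) × (Fin l → ℝ),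
        (Real.exp (∑ j, p.1 j) * Real.exp (∑ j, p.2 j)) • f (expPi p.1, expPi p.2) := by
  have himage : posSet k ×ˢ posSet l = Prod.map (expPi (k := k)) (expPi (k := l)) '' Set.univ := by
    rw [← range_expPi, ← range_expPi, Set.image_univ, Set.range_prodMap]
  have : (volume : Measure ((Fin k → ℝ) × (Fin l → ℝ))).IsAddHaarMeasure :=
    Measure.prod.instIsAddHaarMeasure _ _
  rw [himage, integral_image_eq_integral_abs_det_fderiv_smul volume MeasurableSet.univ
    (fun p _ => ((hasFDerivAt_expPi p.1).prodMap p (hasFDerivAt_expPi p.2)).hasFDerivWithinAt)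
    (expPi_injective.prodMap expPi_injective).injOn, setIntegral_univ]
  simp only [ContinuousLinearMap.det, ContinuousLinearMap.coe_prodMap, LinearMap.det_prodMap,
    det_expPiDeriv, abs_mul, Real.abs_exp, Prod.map_apply']

lemma prod_extR_expPi (τ : Fin k → ℝ) :
    ∏ j ∈ Finset.range k, ((extR (expPi τ) j : ℝ) : ℂ) = (Real.exp (∑ j, τ j) : ℝ) := by
  simp [Finset.prod_range, extR, expPi, Complex.exp_sum]

lemma setIntegral_posSet_mul_inv_prod (f : (Fin k → ℝ) → ℂ) :
    ∫ t in posSet k, f t * (∏ j ∈ Finset.range k, ((extR t j : ℝ) : ℂ))⁻¹ =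
      ∫ τ : Fin k → ℝ, f (expPi τ) := by
  rw [setIntegral_posSet]
  refine integral_congr_ae (.of_forall fun τ => ?_)
  simp only [prod_extR_expPi, real_smul]
  rw [mul_left_comm, mul_inv_cancel₀ (ofReal_ne_zero.2 (Real.exp_ne_zero _)), mul_one]

lemma setIntegral_posSet_prod_mul_inv_prod (f : (Fin k → ℝ) × (Fin l → ℝ) → ℂ) :
    ∫ p in posSet k ×ˢ posSet l, f p * (∏ j ∈ Finset.range l, ((extR p.2 j : ℝ) : ℂ))⁻¹ *
        (∏ j ∈ Finset.range k, ((extR p.1 j : ℝ) : ℂ))⁻¹ =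
      ∫ p : (Fin k → ℝ) × (Fin l → ℝ), f (expPi p.1, expPi p.2) := by
  rw [setIntegral_posSet_prod]
  refine integral_congr_ae (.of_forall fun p => ?_)
  simp only [prod_extR_expPi, real_smul, ofReal_mul]
  have h₁ : ((Real.exp (∑ j, p.1 j) : ℝ) : ℂ) ≠ 0 := ofReal_ne_zero.2 (Real.exp_ne_zero _)
  have h₂ : ((Real.exp (∑ j, p.2 j) : ℝ) : ℂ) ≠ 0 := ofReal_ne_zero.2 (Real.exp_ne_zero _)
  field_simp

lemma setIntegral_Ioi_zero (f : ℝ → E) :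
    ∫ t in Set.Ioi 0, f t = ∫ x, Real.exp x • f (Real.exp x) := by
  rw [← Real.range_exp, ← Set.image_univ, integral_image_eq_integral_abs_deriv_smul
    MeasurableSet.univ (fun x _ => (Real.hasDerivAt_exp x).hasDerivWithinAt)
    Real.exp_injective.injOn, setIntegral_univ]
  simp only [Real.abs_exp]

end LogCoordinates

lemma integral_comp_mulVec {ι E : Type*} [Fintype ι] [DecidableEq ι] [NormedAddCommGroup E]
    [NormedSpace ℝ E] {M : Matrix ι ι ℝ} (hM : M.det ≠ 0) (f : (ι → ℝ) → E) :
    ∫ x, f (M.mulVec x) = |M.det|⁻¹ • ∫ x, f x := by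
  have hinj : Function.Injective (Matrix.toLin' M) := by
    exact Matrix.mulVec_injective_iff_isUnit.2 ((Matrix.isUnit_iff_isUnit_det M).2 hM.isUnit)
  have hemb : MeasurableEmbedding (Matrix.toLin' M) :=
    (LinearMap.isClosedEmbedding_of_injective (LinearMap.ker_eq_bot.2 hinj)).measurableEmbedding
  calc ∫ x, f (M.mulVec x) = ∫ x, f x ∂(volume.map (Matrix.toLin' M)) := (hemb.integral_map f).symm
    _ = |M.det|⁻¹ • ∫ x, f x := by
      rw [Real.map_matrix_volume_pi_eq_smul_volume_pi hM, integral_smul_measure,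
        ENNReal.toReal_ofReal (abs_nonneg _), abs_inv]

/-- The matrix of the linear map `ξ ↦ ((ξ j - ξ (j + 1)) / 2)_j`, where `ξ k = 0`. -/
def rootMatrix (k : ℕ) : Matrix (Fin k) (Fin k) ℝ :=
  fun i j => if j = i then 1 / 2 else if (j : ℕ) = i + 1 then -(1 / 2) else 0

lemma det_rootMatrix (k : ℕ) : (rootMatrix k).det = (1 / 2) ^ k := by
  rw [Matrix.det_of_isUpperTriangular]
  · simp [rootMatrix]
  · intro i j (hji : j < i)
    have hne : (j : ℕ) ≠ i + 1 := by omega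
    simp [rootMatrix, hji.ne, hne]

/-- Logarithms of the simple-root coordinates `y_j = π⁻¹ (x_j / x_{j+1})^{1/2}`, where
`x = exp ξ`. -/
def logRoot {k : ℕ} (ξ : Fin k → ℝ) : Fin k → ℝ :=
  fun j => (extR0 ξ j - extR0 ξ (j + 1)) / 2 - Real.log Real.pi

lemma logRoot_eq {k : ℕ} (ξ : Fin k → ℝ) :
    logRoot ξ = (rootMatrix k).mulVec ξ - fun _ => Real.log Real.pi := by
  ext i
  have hentry : ∀ j, rootMatrix k i j * ξ j =
      (if j = i then ξ j / 2 else 0) - (if (j : ℕ) = i + 1 then ξ j / 2 else 0) := fun j => by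
    rw [rootMatrix]
    split_ifs with h₁ h₂
    · omega
    all_goals ring
  simp only [logRoot, Pi.sub_apply, Matrix.mulVec, dotProduct, hentry,
    Finset.sum_sub_distrib, Finset.sum_ite_eq', Finset.mem_univ, if_true]
  by_cases hi : (i : ℕ) + 1 < k
  · have hval : ∀ j : Fin k, (j : ℕ) = i + 1 ↔ j = ⟨i + 1, hi⟩ := fun j => by rw [Fin.ext_iff]
    simp only [hval, Finset.sum_ite_eq', Finset.mem_univ, if_true, extR0, i.2, hi, dif_pos]
    ring
  · have hval : ∀ j : Fin k, ¬ (j : ℕ) = i + 1 := fun j => by omega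
    simp [hval, extR0, hi]

lemma integral_comp_logRoot {E : Type*} [NormedAddCommGroup E] [NormedSpace ℝ E] {k : ℕ}
    (f : (Fin k → ℝ) → E) : ∫ ξ, f (logRoot ξ) = (2 : ℝ) ^ k • ∫ η, f η := by
  simp only [logRoot_eq]
  rw [integral_comp_mulVec (by rw [det_rootMatrix]; positivity)
    fun x => f (x - fun _ => Real.log Real.pi), integral_sub_right_eq_self f, det_rootMatrix]
  simp

lemma ofReal_exp_cpow (x : ℝ) (z : ℂ) : ((Real.exp x : ℝ) : ℂ) ^ z = cexp (x * z) := by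
  rw [cpow_def_of_ne_zero (by simp), ← ofReal_log (Real.exp_pos x).le, Real.log_exp]

lemma integral_cexp_mul_sub_exp {s : ℂ} (hs : 0 < s.re) :
    ∫ x : ℝ, cexp (s * x - Real.exp x) = Complex.Gamma s := by
  rw [Complex.Gamma_eq_integral hs, Complex.GammaIntegral, setIntegral_Ioi_zero]
  refine integral_congr_ae (.of_forall fun x => ?_)
  simp only [real_smul, ofReal_exp_cpow]
  rw [ofReal_exp x, ofReal_exp, ← Complex.exp_add, ← Complex.exp_add]
  congr 1
  push_cast
  ring

lemma lintegral_exp_mul_sub_exp {σ : ℝ} (hσ : 0 < σ) :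
    ∫⁻ x : ℝ, ENNReal.ofReal (Real.exp (σ * x - Real.exp x)) = ENNReal.ofReal (Real.Gamma σ) := by
  have hGamma : ∫ x : ℝ, Real.exp (σ * x - Real.exp x) = Real.Gamma σ := by
    rw [← ofReal_inj, ← Complex.Gamma_ofReal, ← integral_cexp_mul_sub_exp (by simpa using hσ),
      ← integral_complex_ofReal]
    push_cast
    rfl
  rw [← hGamma, ofReal_integral_eq_lintegral_ofReal]
  · exact Integrable.of_integral_ne_zero (hGamma ▸ (Real.Gamma_pos_of_pos hσ).ne')
  · exact .of_forall fun x => (Real.exp_pos _).le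

lemma besselK_eq (ν : ℂ) (y : ℝ) : BesselK ν y =
    (1 / 2) * ∫ x : ℝ, cexp (ν * x - (y / 2 * (Real.exp x + Real.exp (-x)) : ℝ)) := by
  rw [BesselK, setIntegral_Ioi_zero]
  congr 2 with x
  have hx : (Real.exp x : ℂ) ≠ 0 := by simp
  rw [real_smul, mul_div_cancel₀ _ hx, ofReal_exp_cpow, ← Complex.exp_add, Real.exp_neg]
  congr 1
  push_cast
  ring

section FinCons

variable {E : Type*} [NormedAddCommGroup E] [NormedSpace ℝ E] {n : ℕ}

lemma piFinSuccAbove_zero_symm_apply (p : ℝ × (Fin n → ℝ)) :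
    (MeasurableEquiv.piFinSuccAbove (fun _ : Fin (n + 1) => ℝ) 0).symm p = Fin.cons p.1 p.2 :=
  Fin.insertNth_zero (α := fun _ : Fin (n + 1) => ℝ) p.1 p.2

lemma integral_fin_cons (f : (Fin (n + 1) → ℝ) → E) :
    ∫ ξ, f ξ = ∫ p : ℝ × (Fin n → ℝ), f (Fin.cons p.1 p.2) := by
  have h := (volume_preserving_piFinSuccAbove (fun _ : Fin (n + 1) => ℝ) 0).symm
  simpa only [piFinSuccAbove_zero_symm_apply] using (h.integral_comp' f).symm

lemma lintegral_fin_cons (f : (Fin (n + 1) → ℝ) → ENNReal) :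
    ∫⁻ ξ, f ξ = ∫⁻ p : ℝ × (Fin n → ℝ), f (Fin.cons p.1 p.2) := by
  have h := (volume_preserving_piFinSuccAbove (fun _ : Fin (n + 1) => ℝ) 0).symm
  simpa only [piFinSuccAbove_zero_symm_apply] using
    (h.lintegral_comp_emb (MeasurableEquiv.measurableEmbedding _) f).symm

lemma integral_fin_one (f : ℝ → E) : ∫ ξ : Fin 1 → ℝ, f (ξ 0) = ∫ x, f x :=
  (volume_preserving_funUnique (Fin 1) ℝ).integral_comp' f

lemma lintegral_fin_one (f : ℝ → ENNReal) : ∫⁻ ξ : Fin 1 → ℝ, f (ξ 0) = ∫⁻ x, f x :=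
  (volume_preserving_funUnique (Fin 1) ℝ).lintegral_comp_emb
    (MeasurableEquiv.measurableEmbedding _) f

lemma lintegral_fin_prod (f : Fin n → ℝ → ENNReal) (hf : ∀ j, Measurable (f j)) :
    ∫⁻ ω : Fin n → ℝ, ∏ j, f j (ω j) = ∏ j, ∫⁻ x, f j x := by
  induction n with
  | zero => simp [volume_pi]
  | succ n ih =>
    rw [lintegral_fin_cons, Fin.prod_univ_succ, ← ih _ fun j => hf j.succ, ← lintegral_prod_mul]
    · simp only [Fin.prod_univ_succ, Fin.cons_zero, Fin.cons_succ]
      rfl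
    · exact (hf 0).aemeasurable
    · exact (Finset.measurable_prod _ fun j _ =>
        (hf j.succ).comp (measurable_pi_apply j)).aemeasurable

end FinCons

section Kernels

variable {n : ℕ}

/-- The Givental potential between neighbouring rows of a Givental pattern; `exp` of its negative
is the kernel of the recursion for `GL` Whittaker functions. -/
def giventalExponent (ξ : Fin (n + 1) → ℝ) (ω : Fin n → ℝ) : ℝ :=
  ∑ j : Fin n, (Real.exp (ξ j.castSucc - ω j) + Real.exp (ω j - ξ j.succ))

/-- The potential of the Baxter `Q`-operator of the open Toda chain. -/
def baxterExponent (ξ ω : Fin (n + 1) → ℝ) : ℝ :=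
  ∑ j, Real.exp (ξ j - ω j) + ∑ j : Fin n, Real.exp (ω j.castSucc - ξ j.succ)

/-- The kernel raising the rank of a `GL` Whittaker function, with spectral parameter `c`. -/
def giventalKernel (c : ℂ) (ξ : Fin (n + 1) → ℝ) (ω : Fin n → ℝ) : ℂ :=
  cexp (c * ((∑ j, ξ j - ∑ j, ω j : ℝ) : ℂ) - (giventalExponent ξ ω : ℂ))

/-- The kernel of the Baxter `Q`-operator with spectral parameter `c`. -/
def baxterKernel (c : ℂ) (ξ ω : Fin (n + 1) → ℝ) : ℂ :=
  cexp (c * ((∑ j, ξ j - ∑ j, ω j : ℝ) : ℂ) - (baxterExponent ξ ω : ℂ))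

lemma enorm_cexp (z : ℂ) : ‖cexp z‖ₑ = ENNReal.ofReal (Real.exp z.re) := by
  rw [← ofReal_norm, Complex.norm_exp]

lemma enorm_giventalKernel (c : ℂ) (ξ : Fin (n + 1) → ℝ) (ω : Fin n → ℝ) :
    ‖giventalKernel c ξ ω‖ₑ =
      ENNReal.ofReal (Real.exp (c.re * (∑ j, ξ j - ∑ j, ω j) - giventalExponent ξ ω)) := by
  rw [giventalKernel, enorm_cexp, Complex.sub_re, Complex.re_mul_ofReal, Complex.ofReal_re]

@[fun_prop]
lemma measurable_giventalKernel {α : Type*} [MeasurableSpace α] {c : ℂ}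
    {f : α → Fin (n + 1) → ℝ} {g : α → Fin n → ℝ} (hf : Measurable f) (hg : Measurable g) :
    Measurable fun x => giventalKernel c (f x) (g x) := by
  unfold giventalKernel giventalExponent
  fun_prop

@[fun_prop]
lemma measurable_baxterKernel {α : Type*} [MeasurableSpace α] {c : ℂ}
    {f g : α → Fin (n + 1) → ℝ} (hf : Measurable f) (hg : Measurable g) :
    Measurable fun x => baxterKernel c (f x) (g x) := by
  unfold baxterKernel baxterExponent
  fun_prop

end Kernels

section Exchange

variable {n : ℕ}

/-- The coefficients of `exp (-ξ (j + 1))` in the exchange relation. -/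
def exchangeNum (ω : Fin (n + 1) → ℝ) (ζ : Fin n → ℝ) (j : Fin n) : ℝ :=
  Real.exp (ω j.castSucc) + Real.exp (ζ j)

/-- The coefficients of `exp (ξ j)` in the exchange relation; the term from `ζ` is absent at the
last index. -/
def exchangeDen (ω : Fin (n + 1) → ℝ) (ζ : Fin n → ℝ) (j : Fin (n + 1)) : ℝ :=
  Real.exp (-ω j) + (Fin.snoc (fun i => Real.exp (-ζ i)) 0 : Fin (n + 1) → ℝ) j

/-- The centre of the reflection `ξ ↦ exchangeShift ω ζ - ξ` which carries out the exchange
relation. -/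
def exchangeShift (ω : Fin (n + 1) → ℝ) (ζ : Fin n → ℝ) : Fin (n + 1) → ℝ :=
  (Fin.cons 0 fun j => Real.log (exchangeNum ω ζ j)) - fun j => Real.log (exchangeDen ω ζ j)

lemma exchangeNum_pos (ω : Fin (n + 1) → ℝ) (ζ : Fin n → ℝ) (j : Fin n) :
    0 < exchangeNum ω ζ j := by
  unfold exchangeNum
  positivity

@[simp]
lemma exchangeDen_castSucc (ω : Fin (n + 1) → ℝ) (ζ : Fin n → ℝ) (j : Fin n) :
    exchangeDen ω ζ j.castSucc = Real.exp (-ω j.castSucc) + Real.exp (-ζ j) := by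
  simp [exchangeDen]

@[simp]
lemma exchangeDen_last (ω : Fin (n + 1) → ℝ) (ζ : Fin n → ℝ) :
    exchangeDen ω ζ (Fin.last n) = Real.exp (-ω (Fin.last n)) := by
  simp [exchangeDen]

lemma exchangeDen_pos (ω : Fin (n + 1) → ℝ) (ζ : Fin n → ℝ) (j : Fin (n + 1)) :
    0 < exchangeDen ω ζ j := by
  refine Fin.lastCases ?_ (fun i => ?_) j
  · simp [Real.exp_pos]
  · rw [exchangeDen_castSucc]
    positivity

lemma log_exchangeNum (ω : Fin (n + 1) → ℝ) (ζ : Fin n → ℝ) (j : Fin n) :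
    Real.log (exchangeNum ω ζ j) =
      Real.log (exchangeDen ω ζ j.castSucc) + (ω j.castSucc + ζ j) := by
  have hmul : exchangeNum ω ζ j =
      exchangeDen ω ζ j.castSucc * Real.exp (ω j.castSucc + ζ j) := by
    rw [exchangeDen_castSucc, exchangeNum, add_mul, ← Real.exp_add, ← Real.exp_add]
    ring_nf
  rw [hmul, Real.log_mul (exchangeDen_pos ω ζ _).ne' (Real.exp_ne_zero _), Real.log_exp]

lemma sum_exchangeShift (ω : Fin (n + 1) → ℝ) (ζ : Fin n → ℝ) :
    ∑ j, exchangeShift ω ζ j = ∑ j, ω j + ∑ j, ζ j := by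
  simp only [exchangeShift, Pi.sub_apply, Finset.sum_sub_distrib]
  rw [Fin.sum_cons, Fin.sum_univ_castSucc (f := fun j => Real.log (exchangeDen ω ζ j)),
    Fin.sum_univ_castSucc (f := ω)]
  simp only [log_exchangeNum, Finset.sum_add_distrib, exchangeDen_last, Real.log_exp]
  ring

lemma baxterExponent_add_giventalExponent (ξ ω : Fin (n + 1) → ℝ) (ζ : Fin n → ℝ) :
    baxterExponent ξ ω + giventalExponent ξ ζ = ∑ j, Real.exp (ξ j) * exchangeDen ω ζ j +
      ∑ j : Fin n, Real.exp (-ξ j.succ) * exchangeNum ω ζ j := by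
  rw [baxterExponent, giventalExponent, Fin.sum_univ_castSucc, Fin.sum_univ_castSucc]
  simp only [exchangeDen_castSucc, exchangeDen_last, exchangeNum, mul_add, ← Real.exp_add,
    Finset.sum_add_distrib, neg_add_eq_sub, ← sub_eq_add_neg]
  ring

lemma giventalExponent_add_baxterExponent (ω : Fin (n + 2) → ℝ) (ζ θ : Fin (n + 1) → ℝ) :
    giventalExponent ω θ + baxterExponent ζ θ =
      ∑ j : Fin (n + 1), Real.exp (θ j) * exchangeDen ω ζ j.succ +
        ∑ j, Real.exp (-θ j) * exchangeNum ω ζ j := by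
  rw [baxterExponent, giventalExponent,
    Fin.sum_univ_castSucc (f := fun j => Real.exp (θ j) * exchangeDen ω ζ j.succ)]
  simp only [Fin.succ_castSucc, Fin.succ_last, exchangeDen_castSucc, exchangeDen_last,
    exchangeNum, mul_add, ← Real.exp_add, Finset.sum_add_distrib, neg_add_eq_sub,
    ← sub_eq_add_neg]
  rw [Fin.sum_univ_castSucc (f := fun j : Fin (n + 1) => Real.exp (θ j - ω j.succ))]
  simp only [Fin.succ_castSucc, Fin.succ_last]
  ring

lemma exp_exchangeShift_zero_sub (ω : Fin (n + 1) → ℝ) (ζ : Fin n → ℝ) (x : ℝ) :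
    Real.exp (exchangeShift ω ζ 0 - x) * exchangeDen ω ζ 0 = Real.exp (-x) := by
  have hden := exchangeDen_pos ω ζ 0
  simp only [exchangeShift, Pi.sub_apply, Fin.cons_zero, zero_sub, Real.exp_sub, Real.exp_neg,
    Real.exp_log hden]
  field_simp

lemma exp_exchangeShift_succ_sub (ω : Fin (n + 1) → ℝ) (ζ : Fin n → ℝ) (j : Fin n) (x : ℝ) :
    Real.exp (exchangeShift ω ζ j.succ - x) * exchangeDen ω ζ j.succ =
      Real.exp (-x) * exchangeNum ω ζ j := by
  have hden := exchangeDen_pos ω ζ j.succ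
  have hnum := exchangeNum_pos ω ζ j
  simp only [exchangeShift, Pi.sub_apply, Fin.cons_succ, Real.exp_sub, Real.exp_neg,
    Real.exp_log hden, Real.exp_log hnum]
  field_simp

lemma exp_neg_exchangeShift_succ_sub (ω : Fin (n + 1) → ℝ) (ζ : Fin n → ℝ) (j : Fin n) (x : ℝ) :
    Real.exp (-(exchangeShift ω ζ j.succ - x)) * exchangeNum ω ζ j =
      Real.exp x * exchangeDen ω ζ j.succ := by
  have hden := exchangeDen_pos ω ζ j.succ
  have hnum := exchangeNum_pos ω ζ j
  simp only [exchangeShift, Pi.sub_apply, Fin.cons_succ, neg_sub, Real.exp_sub,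
    Real.exp_log hden, Real.exp_log hnum]
  field_simp

lemma exponent_exchangeShift_sub_cons (ω : Fin (n + 2) → ℝ) (ζ : Fin (n + 1) → ℝ) (x : ℝ)
    (θ : Fin (n + 1) → ℝ) :
    baxterExponent (exchangeShift ω ζ - Fin.cons x θ) ω +
        giventalExponent (exchangeShift ω ζ - Fin.cons x θ) ζ =
      Real.exp (-x) + (giventalExponent ω θ + baxterExponent ζ θ) := by
  rw [baxterExponent_add_giventalExponent, giventalExponent_add_baxterExponent,
    Fin.sum_univ_succ]
  simp only [Pi.sub_apply, Fin.cons_zero, Fin.cons_succ, exp_exchangeShift_zero_sub,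
    exp_exchangeShift_succ_sub, exp_neg_exchangeShift_succ_sub]
  ring

lemma baxterKernel_mul_giventalKernel (c d : ℂ) (ω : Fin (n + 2) → ℝ) (ζ : Fin (n + 1) → ℝ)
    (x : ℝ) (θ : Fin (n + 1) → ℝ) :
    baxterKernel c (exchangeShift ω ζ - Fin.cons x θ) ω *
        giventalKernel d (exchangeShift ω ζ - Fin.cons x θ) ζ =
      cexp ((c + d) * ((-x : ℝ) : ℂ) - Real.exp (-x)) *
        (giventalKernel d ω θ * baxterKernel c ζ θ) := by
  have hsum : ∑ j, (exchangeShift ω ζ - (Fin.cons x θ : Fin (n + 2) → ℝ)) j =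
      ∑ j, ω j + ∑ j, ζ j - (x + ∑ j, θ j) := by
    simp only [Pi.sub_apply, Finset.sum_sub_distrib, sum_exchangeShift, Fin.sum_cons]
  have hexp := congrArg ((↑) : ℝ → ℂ) (exponent_exchangeShift_sub_cons ω ζ x θ)
  simp only [giventalKernel, baxterKernel, ← Complex.exp_add, hsum]
  congr 1
  push_cast at hexp ⊢
  linear_combination -hexp

lemma integral_baxterKernel_mul_giventalKernel {c d : ℂ} (hcd : 0 < (c + d).re)
    (ω : Fin (n + 2) → ℝ) (ζ : Fin (n + 1) → ℝ) :
    ∫ ξ, baxterKernel c ξ ω * giventalKernel d ξ ζ =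
      Complex.Gamma (c + d) * ∫ θ, giventalKernel d ω θ * baxterKernel c ζ θ := by
  rw [← integral_sub_left_eq_self _ volume (exchangeShift ω ζ), integral_fin_cons]
  simp only [baxterKernel_mul_giventalKernel]
  rw [← integral_cexp_mul_sub_exp hcd,
    ← integral_neg_eq_self fun x : ℝ => cexp ((c + d) * x - Real.exp x), ← integral_prod_mul]
  rfl

lemma lintegral_enorm_baxterKernel_mul_giventalKernel {c d : ℂ} (hcd : 0 < (c + d).re)
    (ω : Fin (n + 2) → ℝ) (ζ : Fin (n + 1) → ℝ) :
    ∫⁻ ξ, ‖baxterKernel c ξ ω‖ₑ * ‖giventalKernel d ξ ζ‖ₑ =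
      ENNReal.ofReal (Real.Gamma (c + d).re) *
        ∫⁻ θ, ‖giventalKernel d ω θ‖ₑ * ‖baxterKernel c ζ θ‖ₑ := by
  have hGamma : ∫⁻ x : ℝ, ‖cexp ((c + d) * ((-x : ℝ) : ℂ) - Real.exp (-x))‖ₑ =
      ENNReal.ofReal (Real.Gamma (c + d).re) := by
    rw [← lintegral_exp_mul_sub_exp hcd, ← lintegral_neg_eq_self fun x : ℝ => ENNReal.ofReal _]
    simp only [enorm_cexp, Complex.sub_re, Complex.re_mul_ofReal, Complex.ofReal_re]
  simp only [← enorm_mul]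
  rw [← lintegral_sub_left_eq_self _ (exchangeShift ω ζ), lintegral_fin_cons]
  simp only [baxterKernel_mul_giventalKernel]
  rw [← hGamma, ← lintegral_prod_mul (by fun_prop) (by fun_prop)]
  simp only [enorm_mul]
  rfl

end Exchange

section WhittA

/-- The class one `GL_{n+1}(ℝ)` Whittaker function in logarithmic Givental coordinates. -/
def whittA : (n : ℕ) → (ℕ → ℂ) → (Fin (n + 1) → ℝ) → ℂ
  | 0, a, ξ => cexp (a 0 * ((ξ 0 : ℝ) : ℂ))
  | n + 1, a, ξ => ∫ ω : Fin (n + 1) → ℝ,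
      giventalKernel (a 0) ξ ω * whittA n (fun j => a (j + 1)) ω

/-- The iterated integral of absolute values dominating `whittA`, with values in `[0, ∞]`. -/
def whittAMajorant : (n : ℕ) → (ℕ → ℂ) → (Fin (n + 1) → ℝ) → ENNReal
  | 0, a, ξ => ‖cexp (a 0 * ((ξ 0 : ℝ) : ℂ))‖ₑ
  | n + 1, a, ξ => ∫⁻ ω : Fin (n + 1) → ℝ,
      ‖giventalKernel (a 0) ξ ω‖ₑ * whittAMajorant n (fun j => a (j + 1)) ω

@[fun_prop]
lemma measurable_whittA (n : ℕ) (a : ℕ → ℂ) : Measurable (whittA n a) := by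
  induction n generalizing a with
  | zero =>
    change Measurable fun ξ : Fin 1 → ℝ => cexp (a 0 * ((ξ 0 : ℝ) : ℂ))
    fun_prop
  | succ n ih =>
    have hker : Measurable fun p : (Fin (n + 2) → ℝ) × (Fin (n + 1) → ℝ) =>
        giventalKernel (a 0) p.1 p.2 * whittA n (fun j => a (j + 1)) p.2 := by fun_prop
    exact hker.stronglyMeasurable.integral_prod_right'.measurable

@[fun_prop]
lemma measurable_whittAMajorant (n : ℕ) (a : ℕ → ℂ) : Measurable (whittAMajorant n a) := by
  induction n generalizing a with
  | zero =>
    change Measurable fun ξ : Fin 1 → ℝ => ‖cexp (a 0 * ((ξ 0 : ℝ) : ℂ))‖ₑ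
    fun_prop
  | succ n ih =>
    have hker : Measurable fun p : (Fin (n + 2) → ℝ) × (Fin (n + 1) → ℝ) =>
        ‖giventalKernel (a 0) p.1 p.2‖ₑ * whittAMajorant n (fun j => a (j + 1)) p.2 := by fun_prop
    exact hker.lintegral_prod_right'

lemma enorm_whittA_le (n : ℕ) (a : ℕ → ℂ) (ξ : Fin (n + 1) → ℝ) :
    ‖whittA n a ξ‖ₑ ≤ whittAMajorant n a ξ := by
  induction n generalizing a with
  | zero => exact le_rfl
  | succ n ih =>
    refine (enorm_integral_le_lintegral_enorm _).trans (lintegral_mono fun ω => ?_)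
    rw [enorm_mul]
    gcongr
    exact ih _ ω

lemma whittA_add_const (n : ℕ) (a : ℕ → ℂ) (c : ℂ) (ξ : Fin (n + 1) → ℝ) :
    whittA n (fun j => a j + c) ξ = cexp (c * ((∑ j, ξ j : ℝ) : ℂ)) * whittA n a ξ := by
  induction n generalizing a with
  | zero =>
    simp only [whittA, Fin.sum_univ_succ, Finset.univ_eq_empty, Finset.sum_empty, add_zero]
    rw [← Complex.exp_add, add_mul, add_comm]
  | succ n ih =>
    rw [whittA, whittA, ← integral_const_mul]
    congr with ω
    rw [ih (fun j => a (j + 1)), ← mul_assoc, ← mul_assoc, giventalKernel, giventalKernel,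
      ← Complex.exp_add, ← Complex.exp_add]
    congr 2
    push_cast
    ring

end WhittA

section Bounds

lemma mul_sub_exp_le {κ : ℝ} (hκ : 0 < κ) (r : ℝ) :
    κ * r - Real.exp r ≤ κ * Real.log κ - κ := by
  have htangent := Real.add_one_le_exp (r - Real.log κ)
  rw [Real.exp_sub, Real.exp_log hκ, le_div_iff₀ hκ] at htangent
  linarith

lemma exists_lintegral_bessel_le {δ κ : ℝ} (hκ : 0 < κ) (hδ : δ < κ) :
    ∃ C : ENNReal, C ≠ ⊤ ∧ ∀ p q : ℝ,
      ∫⁻ τ : ℝ, ENNReal.ofReal (Real.exp (δ * τ - Real.exp (p - τ) - Real.exp (τ - q))) ≤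
        C * ENNReal.ofReal (Real.exp (κ * q + (δ - κ) * p)) := by
  refine ⟨ENNReal.ofReal (Real.exp (κ * Real.log κ - κ)) * ENNReal.ofReal (Real.Gamma (κ - δ)),
    by finiteness, fun p q => ?_⟩
  rw [← lintegral_sub_left_eq_self _ p, ← lintegral_exp_mul_sub_exp (sub_pos.2 hδ),
    ← lintegral_const_mul' _ _ ENNReal.ofReal_ne_top,
    ← lintegral_mul_const' _ _ ENNReal.ofReal_ne_top]
  refine lintegral_mono fun x => ?_
  rw [← ENNReal.ofReal_mul (by positivity), ← ENNReal.ofReal_mul (by positivity),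
    ← Real.exp_add, ← Real.exp_add, sub_sub_cancel]
  gcongr
  linarith [mul_sub_exp_le hκ (p - x - q)]

lemma exists_lintegral_bessel_pi_le {n : ℕ} {δ κ : Fin n → ℝ} (hκ : ∀ j, 0 < κ j)
    (hδ : ∀ j, δ j < κ j) :
    ∃ C : ENNReal, C ≠ ⊤ ∧ ∀ p q : Fin n → ℝ,
      ∫⁻ ω : Fin n → ℝ, ENNReal.ofReal (Real.exp
          (∑ j, (δ j * ω j - Real.exp (p j - ω j) - Real.exp (ω j - q j)))) ≤
        C * ENNReal.ofReal (Real.exp (∑ j, (κ j * q j + (δ j - κ j) * p j))) := by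
  choose C hC hle using fun j => exists_lintegral_bessel_le (hκ j) (hδ j)
  refine ⟨∏ j, C j, ENNReal.prod_ne_top fun j _ => hC j, fun p q => ?_⟩
  simp only [Real.exp_sum, ENNReal.ofReal_prod_of_nonneg fun _ _ => Real.exp_nonneg _]
  rw [← Finset.prod_mul_distrib, lintegral_fin_prod (fun j x => ENNReal.ofReal (Real.exp
    (δ j * x - Real.exp (p j - x) - Real.exp (x - q j)))) fun j => by fun_prop]
  exact Finset.prod_le_prod' fun j _ => hle j (p j) (q j)

lemma sum_succ_sub_castSucc {M : Type*} [AddCommGroup M] {n : ℕ} (ω : Fin (n + 1) → M) :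
    ∑ j : Fin n, (ω j.succ - ω j.castSucc) = ω (Fin.last n) - ω 0 := by
  rw [Finset.sum_sub_distrib, sub_eq_sub_iff_add_eq_add, add_comm, ← Fin.sum_univ_succ,
    Fin.sum_univ_castSucc, add_comm]

lemma exists_lintegral_exp_sub_giventalExponent_le {n : ℕ} {e : Fin (n + 1) → ℝ}
    (he : ∀ j, 0 < e j) {p q : ℝ} (hp : 0 ≤ p) (hq : 0 ≤ q) :
    ∃ C : ENNReal, C ≠ ⊤ ∧ ∀ ξ : Fin (n + 2) → ℝ,
      ∫⁻ ω : Fin (n + 1) → ℝ, ENNReal.ofReal (Real.exp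
          (p * ω (Fin.last n) - q * ω 0 - giventalExponent ξ ω)) ≤
        C * ENNReal.ofReal (Real.exp (∑ j, e j * (ξ j.succ - ξ j.castSucc) +
          (p * ξ (Fin.last (n + 1)) - q * ξ 0))) := by
  let u : Fin (n + 1) → ℝ := Pi.single (Fin.last n) p
  let v : Fin (n + 1) → ℝ := Pi.single 0 q
  have hu : 0 ≤ u := Pi.single_nonneg.2 hp
  have hv : 0 ≤ v := Pi.single_nonneg.2 hq
  have hu_sum : ∀ x : Fin (n + 1) → ℝ, ∑ j, u j * x j = p * x (Fin.last n) := fun x => by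
    simp [u, Pi.single_apply]
  have hv_sum : ∀ x : Fin (n + 1) → ℝ, ∑ j, v j * x j = q * x 0 := fun x => by
    simp [v, Pi.single_apply]
  obtain ⟨C, hC, hle⟩ := exists_lintegral_bessel_pi_le (δ := u - v) (κ := e + u)
    (fun j => add_pos_of_pos_of_nonneg (he j) (hu j))
    (fun j => by
      have hvj : 0 ≤ v j := hv j
      simp only [Pi.sub_apply, Pi.add_apply]
      linarith [he j])
  refine ⟨C, hC, fun ξ => ?_⟩
  convert hle (fun j => ξ j.castSucc) (fun j => ξ j.succ) using 6 with ω
  · rw [← hu_sum, ← hv_sum, giventalExponent, ← Finset.sum_sub_distrib,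
      ← Finset.sum_sub_distrib]
    refine Finset.sum_congr rfl fun j _ => ?_
    simp only [Pi.sub_apply]
    ring
  · have hlast := hu_sum fun j => ξ j.succ
    have hzero := hv_sum fun j => ξ j.castSucc
    rw [Fin.succ_last] at hlast
    rw [Fin.castSucc_zero] at hzero
    rw [← hlast, ← hzero, ← Finset.sum_sub_distrib, ← Finset.sum_add_distrib]
    refine Finset.sum_congr rfl fun j _ => ?_
    simp only [Pi.sub_apply, Pi.add_apply]
    ring

lemma exists_whittAMajorant_le (n : ℕ) {a : ℕ → ℂ} (ha : ∀ j < n + 1, (a j).re = 0)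
    {e : Fin n → ℝ} (he : ∀ j, 0 < e j) :
    ∃ C : ENNReal, C ≠ ⊤ ∧ ∀ ξ, whittAMajorant n a ξ ≤
      C * ENNReal.ofReal (Real.exp (∑ j, e j * (ξ j.succ - ξ j.castSucc))) := by
  induction n generalizing a with
  | zero => exact ⟨1, ENNReal.one_ne_top, fun ξ => by simp [whittAMajorant, enorm_cexp, ha 0]⟩
  | succ n ih =>
    obtain ⟨ε, hε, hεe⟩ : ∃ ε, 0 < ε ∧ ∀ j, ε < e j := by
      obtain ⟨i, hi⟩ := Finite.exists_min e
      exact ⟨e i / 2, half_pos (he i), fun j => (half_lt_self (he i)).trans_le (hi j)⟩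
    obtain ⟨C, hC, hCle⟩ := ih (fun j hj => ha (j + 1) (by omega)) (e := fun _ => ε) fun _ => hε
    obtain ⟨D, hD, hDle⟩ := exists_lintegral_exp_sub_giventalExponent_le
      (fun j => sub_pos.2 (hεe j)) hε.le hε.le
    refine ⟨C * D, ENNReal.mul_ne_top hC hD, fun ξ => ?_⟩
    calc whittAMajorant (n + 1) a ξ
        ≤ ∫⁻ ω : Fin (n + 1) → ℝ, C * ENNReal.ofReal (Real.exp
          (ε * ω (Fin.last n) - ε * ω 0 - giventalExponent ξ ω)) := by
          refine lintegral_mono fun ω => (mul_le_mul_right (hCle ω) _).trans (le_of_eq ?_)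
          rw [mul_left_comm, enorm_giventalKernel, ha 0 (by omega),
            ← ENNReal.ofReal_mul (Real.exp_nonneg _), ← Real.exp_add, ← Finset.mul_sum,
            sum_succ_sub_castSucc]
          ring_nf
      _ ≤ C * (D * ENNReal.ofReal (Real.exp (∑ j, (e j - ε) * (ξ j.succ - ξ j.castSucc) +
          (ε * ξ (Fin.last (n + 1)) - ε * ξ 0)))) := by
          rw [lintegral_const_mul' _ _ hC]
          gcongr
          exact hDle ξ
      _ = C * D * ENNReal.ofReal (Real.exp (∑ j, e j * (ξ j.succ - ξ j.castSucc))) := by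
          rw [mul_assoc, ← mul_sub, ← sum_succ_sub_castSucc, Finset.mul_sum,
            ← Finset.sum_add_distrib]
          simp only [← add_mul, sub_add_cancel]

lemma whittAMajorant_ne_top (n : ℕ) {a : ℕ → ℂ} (ha : ∀ j < n + 1, (a j).re = 0)
    (ξ : Fin (n + 1) → ℝ) : whittAMajorant n a ξ ≠ ⊤ := by
  obtain ⟨C, hC, hle⟩ := exists_whittAMajorant_le n ha (e := fun _ => 1) fun _ => one_pos
  exact ne_top_of_le_ne_top (by finiteness) (hle ξ)

end Bounds

section Baxter

variable {n : ℕ} {a : ℕ → ℂ} {c : ℂ}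

lemma baxterKernel_mul_whittA_zero (ξ ω : Fin 1 → ℝ) :
    baxterKernel c ξ ω * whittA 0 a ξ =
      cexp ((c + a 0) * ((ξ 0 - ω 0 : ℝ) : ℂ) - Real.exp (ξ 0 - ω 0)) * whittA 0 a ω := by
  simp only [baxterKernel, baxterExponent, whittA, ← Complex.exp_add, Fin.sum_univ_succ,
    Finset.univ_eq_empty, Finset.sum_empty, add_zero]
  congr 1
  push_cast
  ring

lemma lintegral_enorm_baxterKernel_mul_whittAMajorant_zero (hca : 0 < (c + a 0).re)
    (ω : Fin 1 → ℝ) :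
    ∫⁻ ξ, ‖baxterKernel c ξ ω‖ₑ * whittAMajorant 0 a ξ =
      ENNReal.ofReal (Real.Gamma (c + a 0).re) * whittAMajorant 0 a ω := by
  change ∫⁻ ξ : Fin 1 → ℝ, ‖baxterKernel c ξ ω‖ₑ * ‖whittA 0 a ξ‖ₑ = _ * ‖whittA 0 a ω‖ₑ
  simp only [← enorm_mul, baxterKernel_mul_whittA_zero]
  rw [lintegral_fin_one fun x => ‖cexp ((c + a 0) * ((x - ω 0 : ℝ) : ℂ) - Real.exp (x - ω 0)) *
      whittA 0 a ω‖ₑ,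
    lintegral_sub_right_eq_self
      (fun x : ℝ => ‖cexp ((c + a 0) * (x : ℂ) - Real.exp x) * whittA 0 a ω‖ₑ)]
  simp only [enorm_mul, enorm_cexp, Complex.sub_re, Complex.re_mul_ofReal, Complex.ofReal_re]
  rw [lintegral_mul_const' _ _ enorm_ne_top, lintegral_exp_mul_sub_exp hca]

lemma lintegral_enorm_baxterKernel_mul_whittAMajorant (hca : ∀ j < n + 1, 0 < (c + a j).re)
    (ω : Fin (n + 1) → ℝ) :
    ∫⁻ ξ, ‖baxterKernel c ξ ω‖ₑ * whittAMajorant n a ξ =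
      (∏ j ∈ Finset.range (n + 1), ENNReal.ofReal (Real.Gamma (c + a j).re)) *
        whittAMajorant n a ω := by
  induction n generalizing a with
  | zero =>
    simpa only [zero_add, Finset.prod_range_one] using
      lintegral_enorm_baxterKernel_mul_whittAMajorant_zero (hca 0 one_pos) ω
  | succ n ih =>
    let a' : ℕ → ℂ := fun j => a (j + 1)
    have hΓ := ENNReal.ofReal_ne_top (r := Real.Gamma (c + a 0).re)
    calc ∫⁻ ξ, ‖baxterKernel c ξ ω‖ₑ * whittAMajorant (n + 1) a ξ
        = ∫⁻ ξ, ∫⁻ ζ, ‖baxterKernel c ξ ω‖ₑ *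
            (‖giventalKernel (a 0) ξ ζ‖ₑ * whittAMajorant n a' ζ) :=
          lintegral_congr fun ξ => (lintegral_const_mul' _ _ enorm_ne_top).symm
      _ = ∫⁻ ζ, ∫⁻ ξ, ‖baxterKernel c ξ ω‖ₑ *
            (‖giventalKernel (a 0) ξ ζ‖ₑ * whittAMajorant n a' ζ) :=
          lintegral_lintegral_swap (by fun_prop)
      _ = ∫⁻ ζ, ENNReal.ofReal (Real.Gamma (c + a 0).re) *
            ∫⁻ θ, ‖giventalKernel (a 0) ω θ‖ₑ *
              (‖baxterKernel c ζ θ‖ₑ * whittAMajorant n a' ζ) := by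
          refine lintegral_congr fun ζ => ?_
          simp only [← mul_assoc]
          rw [lintegral_mul_const _ (by fun_prop), lintegral_mul_const _ (by fun_prop),
            lintegral_enorm_baxterKernel_mul_giventalKernel (hca 0 (by omega)), mul_assoc]
      _ = ENNReal.ofReal (Real.Gamma (c + a 0).re) * ∫⁻ θ, ∫⁻ ζ,
            ‖giventalKernel (a 0) ω θ‖ₑ *
              (‖baxterKernel c ζ θ‖ₑ * whittAMajorant n a' ζ) := by
          rw [lintegral_const_mul' _ _ hΓ, lintegral_lintegral_swap (by fun_prop)]
      _ = (∏ j ∈ Finset.range (n + 2), ENNReal.ofReal (Real.Gamma (c + a j).re)) *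
            whittAMajorant (n + 1) a ω := by
          simp only [lintegral_const_mul' _ _ enorm_ne_top,
            ih (a := a') fun j hj => hca (j + 1) (by omega)]
          simp only [mul_left_comm ‖giventalKernel _ _ _‖ₑ]
          rw [lintegral_const_mul' _ _ (ENNReal.prod_ne_top fun j _ => ENNReal.ofReal_ne_top),
            Finset.prod_range_succ' _ (n + 1), mul_left_comm, mul_assoc]
          rfl

lemma integrable_mul_mul_whittA {γ : Type*} [MeasurableSpace γ] {μ : Measure γ} [SFinite μ]
    {k : γ → ℂ} (hk : Measurable k) {l : γ × (Fin (n + 1) → ℝ) → ℂ} (hl : Measurable l)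
    (hfin : ∫⁻ x, ‖k x‖ₑ * ∫⁻ ξ, ‖l (x, ξ)‖ₑ * whittAMajorant n a ξ ∂volume ∂μ < ⊤) :
    Integrable (fun p => k p.1 * (l p * whittA n a p.2)) (μ.prod volume) := by
  have hmeas : Measurable fun p => k p.1 * (l p * whittA n a p.2) := by fun_prop
  refine ⟨hmeas.aestronglyMeasurable, ?_⟩
  rw [hasFiniteIntegral_iff_enorm, lintegral_prod _ hmeas.enorm.aemeasurable]
  refine lt_of_le_of_lt (lintegral_mono fun x => ?_) hfin
  simp only [enorm_mul]
  rw [lintegral_const_mul' _ _ enorm_ne_top]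
  gcongr with ξ
  exact enorm_whittA_le n a ξ

lemma integrable_baxterKernel_mul_giventalKernel_mul_whittA (hc : 0 < c.re)
    (ha : ∀ j < n + 2, (a j).re = 0) (ω : Fin (n + 2) → ℝ) :
    Integrable (fun p : (Fin (n + 2) → ℝ) × (Fin (n + 1) → ℝ) => baxterKernel c p.1 ω *
      (giventalKernel (a 0) p.1 p.2 * whittA n (fun j => a (j + 1)) p.2))
      (volume.prod volume) := by
  refine integrable_mul_mul_whittA (k := fun ξ => baxterKernel c ξ ω) (by fun_prop) (by fun_prop) ?_
  calc ∫⁻ ξ, ‖baxterKernel c ξ ω‖ₑ * whittAMajorant (n + 1) a ξ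
      = (∏ j ∈ Finset.range (n + 2), ENNReal.ofReal (Real.Gamma (c + a j).re)) *
          whittAMajorant (n + 1) a ω :=
        lintegral_enorm_baxterKernel_mul_whittAMajorant
          (fun j hj => by rwa [Complex.add_re, ha j hj, add_zero]) ω
    _ < ⊤ := ENNReal.mul_lt_top (ENNReal.prod_lt_top fun j _ => ENNReal.ofReal_lt_top)
        (whittAMajorant_ne_top _ ha ω).lt_top

lemma integrable_giventalKernel_mul_baxterKernel_mul_whittA (hc : 0 < c.re)
    (ha : ∀ j < n + 2, (a j).re = 0) (ω : Fin (n + 2) → ℝ) :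
    Integrable (fun p : (Fin (n + 1) → ℝ) × (Fin (n + 1) → ℝ) => giventalKernel (a 0) ω p.1 *
      (baxterKernel c p.2 p.1 * whittA n (fun j => a (j + 1)) p.2)) (volume.prod volume) := by
  refine integrable_mul_mul_whittA (k := giventalKernel (a 0) ω) (by fun_prop) (by fun_prop) ?_
  simp only [lintegral_enorm_baxterKernel_mul_whittAMajorant (a := fun j => a (j + 1))
    fun j (hj : j < n + 1) => by rwa [Complex.add_re, ha (j + 1) (by omega), add_zero],
    mul_left_comm ‖giventalKernel _ _ _‖ₑ]
  rw [lintegral_const_mul' _ _ (ENNReal.prod_ne_top fun j _ => ENNReal.ofReal_ne_top)]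
  exact ENNReal.mul_lt_top (ENNReal.prod_lt_top fun j _ => ENNReal.ofReal_lt_top)
    (whittAMajorant_ne_top (n + 1) ha ω).lt_top

lemma integral_baxterKernel_mul_whittA (hc : 0 < c.re) (ha : ∀ j < n + 1, (a j).re = 0)
    (ω : Fin (n + 1) → ℝ) :
    ∫ ξ, baxterKernel c ξ ω * whittA n a ξ =
      (∏ j ∈ Finset.range (n + 1), Complex.Gamma (c + a j)) * whittA n a ω := by
  have hca : 0 < (c + a 0).re := by rwa [Complex.add_re, ha 0 (by omega), add_zero]
  induction n generalizing a with
  | zero =>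
    simp only [baxterKernel_mul_whittA_zero]
    rw [integral_fin_one fun x => cexp ((c + a 0) * ((x - ω 0 : ℝ) : ℂ) - Real.exp (x - ω 0)) *
        whittA 0 a ω,
      integral_sub_right_eq_self
        (fun x : ℝ => cexp ((c + a 0) * (x : ℂ) - Real.exp x) * whittA 0 a ω),
      integral_mul_const, integral_cexp_mul_sub_exp hca, zero_add, Finset.prod_range_one]
  | succ n ih =>
    let a' : ℕ → ℂ := fun j => a (j + 1)
    have ha' : ∀ j < n + 1, (a' j).re = 0 := fun j hj => ha (j + 1) (by omega)
    calc ∫ ξ, baxterKernel c ξ ω * whittA (n + 1) a ξ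
        = ∫ ξ, ∫ ζ, baxterKernel c ξ ω * (giventalKernel (a 0) ξ ζ * whittA n a' ζ) := by
          simp only [integral_const_mul]
          rfl
      _ = ∫ ζ, ∫ ξ, baxterKernel c ξ ω * (giventalKernel (a 0) ξ ζ * whittA n a' ζ) :=
          integral_integral_swap
            (integrable_baxterKernel_mul_giventalKernel_mul_whittA hc ha ω)
      _ = ∫ ζ, Complex.Gamma (c + a 0) *
            ∫ θ, giventalKernel (a 0) ω θ * (baxterKernel c ζ θ * whittA n a' ζ) := by
          simp only [← mul_assoc, integral_mul_const]
          simp only [integral_baxterKernel_mul_giventalKernel hca]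
      _ = Complex.Gamma (c + a 0) *
            ∫ θ, ∫ ζ, giventalKernel (a 0) ω θ * (baxterKernel c ζ θ * whittA n a' ζ) := by
          rw [integral_const_mul, ← integral_integral_swap
            (integrable_giventalKernel_mul_baxterKernel_mul_whittA hc ha ω)]
      _ = (∏ j ∈ Finset.range (n + 2), Complex.Gamma (c + a j)) * whittA (n + 1) a ω := by
          simp only [integral_const_mul,
            fun θ => ih ha' θ (by rwa [Complex.add_re, ha' 0 (by omega), add_zero])]
          simp only [mul_left_comm (giventalKernel _ _ _)]
          rw [integral_const_mul, Finset.prod_range_succ' _ (n + 1), mul_left_comm, mul_assoc]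
          rfl

variable {γ : Type*} [MeasurableSpace γ] {μ : Measure γ} {g : γ → Fin (n + 1) → ℝ} {w : γ → ℂ}

lemma lintegral_mul_baxterKernel_mul_whittAMajorant_lt_top (hc : 0 < c.re)
    (ha : ∀ j < n + 1, (a j).re = 0) (hfin : ∫⁻ x, ‖w x‖ₑ * whittAMajorant n a (g x) ∂μ < ⊤) :
    ∫⁻ x, ‖w x‖ₑ * (∫⁻ ξ, ‖baxterKernel c ξ (g x)‖ₑ * whittAMajorant n a ξ) ∂μ < ⊤ := by
  simp only [lintegral_enorm_baxterKernel_mul_whittAMajorant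
    fun j hj => by rwa [Complex.add_re, ha j hj, add_zero], mul_left_comm ‖w _‖ₑ]
  rw [lintegral_const_mul' _ _ (ENNReal.prod_ne_top fun j _ => ENNReal.ofReal_ne_top)]
  exact ENNReal.mul_lt_top (ENNReal.prod_lt_top fun j _ => ENNReal.ofReal_lt_top) hfin

variable [SFinite μ]

lemma integrable_mul_baxterKernel_mul_whittA (hc : 0 < c.re) (ha : ∀ j < n + 1, (a j).re = 0)
    (hg : Measurable g) (hw : Measurable w)
    (hfin : ∫⁻ x, ‖w x‖ₑ * whittAMajorant n a (g x) ∂μ < ⊤) :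
    Integrable (fun p : γ × (Fin (n + 1) → ℝ) =>
      w p.1 * (baxterKernel c p.2 (g p.1) * whittA n a p.2)) (μ.prod volume) :=
  integrable_mul_mul_whittA hw (by fun_prop)
    (lintegral_mul_baxterKernel_mul_whittAMajorant_lt_top hc ha hfin)

lemma integral_whittA_mul_integral_baxterKernel (hc : 0 < c.re) (ha : ∀ j < n + 1, (a j).re = 0)
    (hg : Measurable g) (hw : Measurable w)
    (hfin : ∫⁻ x, ‖w x‖ₑ * whittAMajorant n a (g x) ∂μ < ⊤) :
    ∫ ξ, whittA n a ξ * ∫ x, baxterKernel c ξ (g x) * w x ∂μ =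
      (∏ j ∈ Finset.range (n + 1), Complex.Gamma (c + a j)) *
        ∫ x, whittA n a (g x) * w x ∂μ := by
  calc ∫ ξ, whittA n a ξ * ∫ x, baxterKernel c ξ (g x) * w x ∂μ
      = ∫ ξ, ∫ x, w x * (baxterKernel c ξ (g x) * whittA n a ξ) ∂μ := by
        simp only [← integral_const_mul, mul_comm, mul_left_comm]
    _ = ∫ x, (∫ ξ, w x * (baxterKernel c ξ (g x) * whittA n a ξ)) ∂μ :=
        (integral_integral_swap
          (integrable_mul_baxterKernel_mul_whittA hc ha hg hw hfin)).symm
    _ = (∏ j ∈ Finset.range (n + 1), Complex.Gamma (c + a j)) *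
          ∫ x, whittA n a (g x) * w x ∂μ := by
        simp only [integral_const_mul, integral_baxterKernel_mul_whittA hc ha]
        simp only [mul_left_comm (w _), mul_comm (w _), integral_const_mul]

lemma integral_whittA_mul_integral_baxterKernel_mul_baxterKernel {d : ℂ} (hc : 0 < c.re)
    (hd : 0 < d.re) (ha : ∀ j < n + 1, (a j).re = 0) (hg : Measurable g) (hw : Measurable w)
    (hfin : ∫⁻ x, ‖w x‖ₑ * whittAMajorant n a (g x) ∂μ < ⊤) :
    ∫ ξ, whittA n a ξ * ∫ p : (Fin (n + 1) → ℝ) × γ,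
        baxterKernel c ξ p.1 * (baxterKernel d p.1 (g p.2) * w p.2) ∂(volume.prod μ) =
      (∏ j ∈ Finset.range (n + 1), Complex.Gamma (c + a j)) *
        ((∏ j ∈ Finset.range (n + 1), Complex.Gamma (d + a j)) *
          ∫ x, whittA n a (g x) * w x ∂μ) := by
  have hint : Integrable (fun p : (Fin (n + 1) → ℝ) × γ =>
      whittA n a p.1 * (baxterKernel d p.1 (g p.2) * w p.2)) (volume.prod μ) := by
    convert (integrable_mul_baxterKernel_mul_whittA hd ha hg hw hfin).swap using 2 with p
    simp only [Function.comp_apply, Prod.fst_swap, Prod.snd_swap]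
    ring
  have hfin' : ∫⁻ p : (Fin (n + 1) → ℝ) × γ,
      ‖baxterKernel d p.1 (g p.2) * w p.2‖ₑ * whittAMajorant n a p.1 ∂(volume.prod μ) < ⊤ := by
    rw [lintegral_prod_symm _ (by fun_prop)]
    convert lintegral_mul_baxterKernel_mul_whittAMajorant_lt_top hd ha hfin using 2
    ext x
    rw [← lintegral_const_mul' _ _ enorm_ne_top]
    simp only [enorm_mul, mul_comm, mul_left_comm]
  rw [integral_whittA_mul_integral_baxterKernel hc ha (g := Prod.fst) (by fun_prop) (by fun_prop)
    hfin', integral_prod _ hint]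
  simp only [integral_const_mul]
  rw [integral_whittA_mul_integral_baxterKernel hd ha hg hw hfin]

end Baxter

section Coordinates

variable {k : ℕ}

lemma pi_cpow (z : ℂ) : (Real.pi : ℂ) ^ z = cexp (Real.log Real.pi * z) := by
  rw [← ofReal_exp_cpow, Real.exp_log Real.pi_pos]

@[simp]
lemma extR_val (t : Fin k → ℝ) (j : Fin k) : extR t j = t j := by simp [extR]

lemma extR_val_succ (t : Fin (k + 1) → ℝ) (j : Fin k) : extR t (j + 1) = t j.succ :=
  extR_val t j.succ

lemma extR_val_castSucc (t : Fin (k + 1) → ℝ) (j : Fin k) : extR t j = t j.castSucc :=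
  extR_val t j.castSucc

lemma extR_expPi (τ : Fin k → ℝ) : extR (expPi τ) = fun j => Real.exp (extR0 τ j) := by
  ext j
  by_cases hj : j < k <;> simp [extR, extR0, expPi, hj]

@[simp]
lemma extR0_val (t : Fin k → ℝ) (j : Fin k) : extR0 t j = t j := by simp [extR0]

@[simp]
lemma extR0_self (t : Fin k → ℝ) : extR0 t k = 0 := by simp [extR0]

/-- The coordinates `y_j = π⁻¹ (x_j / x_{j+1})^{1/2}`, where `x_j = exp (X j)`. -/
def rootCoord (X : ℕ → ℝ) (j : ℕ) : ℝ := Real.exp ((X j - X (j + 1)) / 2) / Real.pi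

lemma pi_mul_rootCoord (X : ℕ → ℝ) (j : ℕ) :
    Real.pi * rootCoord X j = Real.exp ((X j - X (j + 1)) / 2) := by
  rw [rootCoord, mul_div_cancel₀ _ Real.pi_ne_zero]

lemma rootCoord_cpow (X : ℕ → ℝ) (j : ℕ) (z : ℂ) : ((rootCoord X j : ℝ) : ℂ) ^ z =
    cexp (((X j - X (j + 1)) / 2 - Real.log Real.pi : ℝ) * z) := by
  rw [← ofReal_exp_cpow, Real.exp_sub, Real.exp_log Real.pi_pos, rootCoord]

lemma rootCoord_mul_sqrt_exp (X : ℕ → ℝ) (j : ℕ) (x : ℝ) :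
    rootCoord X j * Real.sqrt (Real.exp x) =
      Real.exp ((X j - X (j + 1) + x) / 2) / Real.pi := by
  rw [rootCoord, ← Real.exp_half, div_mul_eq_mul_div, ← Real.exp_add, ← add_div]

lemma neg_exp_half_sq_mul_exp_sub (x τ : ℝ) :
    -(Real.exp (x / 2)) ^ 2 * Real.exp τ - 1 / Real.exp τ =
      -(Real.exp (x + τ) + Real.exp (-τ)) := by
  rw [← Real.exp_nat_mul, neg_mul, ← Real.exp_add, one_div, ← Real.exp_neg]
  push_cast
  ring_nf

/-- The tuple `ξ` followed by a zero. -/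
def appendZero (ξ : Fin k → ℝ) : Fin (k + 1) → ℝ := Fin.snoc ξ 0

@[simp]
lemma appendZero_castSucc (ξ : Fin k → ℝ) (j : Fin k) : appendZero ξ j.castSucc = ξ j :=
  Fin.snoc_castSucc (α := fun _ => ℝ) 0 ξ j

@[simp]
lemma appendZero_last (ξ : Fin k → ℝ) : appendZero ξ (Fin.last k) = 0 :=
  Fin.snoc_last (α := fun _ => ℝ) 0 ξ

lemma appendZero_eq_extR0 (ξ : Fin k → ℝ) : appendZero ξ = fun j : Fin (k + 1) => extR0 ξ j := by
  ext j
  refine Fin.lastCases ?_ (fun i => ?_) j <;> simp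

@[simp]
lemma sum_appendZero (ξ : Fin k → ℝ) : ∑ j, appendZero ξ j = ∑ j, ξ j := by
  simp [Fin.sum_univ_castSucc]

lemma sum_appendZero_castSucc_sub_succ (ξ : Fin (k + 1) → ℝ) :
    ∑ j : Fin (k + 1), (appendZero ξ j.castSucc - appendZero ξ j.succ) = ξ 0 := by
  rw [← neg_inj, ← Finset.sum_neg_distrib]
  simp only [neg_sub, sum_succ_sub_castSucc, appendZero_last, zero_sub]
  exact congrArg Neg.neg (appendZero_castSucc ξ 0)

@[fun_prop]
lemma measurable_appendZero : Measurable (appendZero (k := k)) := by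
  refine measurable_pi_lambda _ fun j => Fin.lastCases ?_ (fun i => ?_) j <;>
    simp only [appendZero_last, appendZero_castSucc] <;> fun_prop

lemma baxterExponent_add_exp_last (ξ ω : Fin (k + 1) → ℝ) :
    baxterExponent ξ ω + Real.exp (ω (Fin.last k)) = giventalExponent (appendZero ξ) ω := by
  rw [baxterExponent, giventalExponent, Finset.sum_add_distrib,
    Fin.sum_univ_castSucc (f := fun j => Real.exp (ω j - appendZero ξ j.succ))]
  simp only [appendZero_castSucc, Fin.succ_last, appendZero_last, Fin.succ_castSucc, sub_zero]
  ring

lemma baxterExponent_appendZero (ω : Fin (k + 1) → ℝ) (ν : Fin k → ℝ) :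
    baxterExponent ω (appendZero ν) = Real.exp (ω (Fin.last k)) + giventalExponent ω ν := by
  rw [baxterExponent, giventalExponent, Finset.sum_add_distrib, Fin.sum_univ_castSucc]
  simp only [appendZero_castSucc, appendZero_last, sub_zero]
  ring

end Coordinates

section WhittB

/-- The class one `SO_{2n+1}(ℝ)` Whittaker function in logarithmic coordinates. -/
def whittB (n : ℕ) (b : ℕ → ℂ) (ξ : Fin n → ℝ) : ℂ := WhittBr n b (rootCoord (extR0 ξ))

lemma whittBr_congr (n : ℕ) (b : ℕ → ℂ) {y z : ℕ → ℝ} (h : ∀ j < n, y j = z j) :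
    WhittBr n b y = WhittBr n b z := by
  match n with
  | 0 => rfl
  | 1 => simp only [WhittBr, h 0 one_pos]
  | n + 2 =>
    simp only [WhittBr]
    refine integral_congr_ae (.of_forall fun p => ?_)
    dsimp only
    congr 3
    congr 1
    · congr 1
      · congr 1
        ext j
        split_ifs with hj
        · rw [h (j + 1) (by omega)]
        · rw [h (n + 1) (by omega)]
      · exact Finset.prod_congr rfl fun j hj => by rw [h j (Finset.mem_range.1 hj)]
    · refine Finset.prod_congr rfl fun j hj => ?_
      rw [h j ((Finset.mem_range.1 hj).trans (Nat.lt_succ_self _))]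

/-- The shear `(ω, ν) ↦ (ω - ξ, tail ω - ν)`, which turns the integration variables of the
recursion for `WhittBr` into Givental coordinates. -/
def shearEquiv {n : ℕ} (ξ : Fin (n + 1) → ℝ) :
    (Fin (n + 1) → ℝ) × (Fin n → ℝ) ≃ᵐ (Fin (n + 1) → ℝ) × (Fin n → ℝ) where
  toFun p := (p.1 - ξ, Fin.tail p.1 - p.2)
  invFun p := (p.1 + ξ, Fin.tail (p.1 + ξ) - p.2)
  left_inv p := by simp
  right_inv p := by simp
  measurable_toFun := by
    change Measurable fun p : (Fin (n + 1) → ℝ) × (Fin n → ℝ) => (p.1 - ξ, Fin.tail p.1 - p.2)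
    exact Continuous.measurable (by unfold Fin.tail; fun_prop)
  measurable_invFun := by
    change Measurable fun p : (Fin (n + 1) → ℝ) × (Fin n → ℝ) =>
      (p.1 + ξ, Fin.tail (p.1 + ξ) - p.2)
    exact Continuous.measurable (by unfold Fin.tail; fun_prop)

lemma measurePreserving_shearEquiv {n : ℕ} (ξ : Fin (n + 1) → ℝ) :
    MeasurePreserving (shearEquiv ξ) := by
  refine (measurePreserving_sub_right volume ξ).skew_product (g := fun ω ν => Fin.tail ω - ν)
    (Continuous.measurable (by unfold Fin.tail; fun_prop)) (.of_forall fun ω => ?_)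
  exact (Measure.measurePreserving_sub_left volume (Fin.tail ω)).map_eq

lemma prod_whittBr_kernel_left (n : ℕ) (β : ℂ) (ξ ω : Fin (n + 1) → ℝ) :
    ∏ j ∈ Finset.range (n + 1),
      (cexp (((-(Real.pi * rootCoord (extR0 ξ) j) ^ 2 * extR (expPi (ω - ξ)) j -
          1 / extR (expPi (ω - ξ)) j : ℝ) : ℂ)) *
        ((Real.pi * rootCoord (extR0 ξ) j : ℝ) : ℂ) ^ β) =
      cexp (β / 2 * (ξ 0 : ℝ) - (giventalExponent (appendZero ξ) ω : ℝ)) := by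
  rw [Finset.prod_range, giventalExponent, ← sum_appendZero_castSucc_sub_succ ξ, ofReal_sum,
    ofReal_sum, Finset.mul_sum,
    ← Finset.sum_sub_distrib, Complex.exp_sum]
  refine Finset.prod_congr rfl fun j _ => ?_
  simp only [appendZero_eq_extR0, extR_val, pi_mul_rootCoord, expPi, Pi.sub_apply,
    neg_exp_half_sq_mul_exp_sub, ofReal_exp_cpow, ← Complex.exp_add, extR0_val, Fin.val_castSucc,
    Fin.val_succ]
  rw [neg_sub, show ξ j - extR0 ξ (j + 1) + (ω j - ξ j) = ω j - extR0 ξ (j + 1) by ring]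
  congr 1
  push_cast
  ring

lemma prod_whittBr_kernel_right (n : ℕ) (β : ℂ) (ξ ω : Fin (n + 1) → ℝ) (ν : Fin n → ℝ) :
    ∏ j ∈ Finset.range n,
      (cexp (((-(Real.pi * rootCoord (extR0 ξ) j) ^ 2 *
            (extR (expPi (ω - ξ)) j / extR (expPi (ω - ξ)) (j + 1)) *
              extR (expPi (Fin.tail ω - ν)) j -
          1 / extR (expPi (Fin.tail ω - ν)) j : ℝ) : ℂ)) *
        ((extR (expPi (ω - ξ)) (j + 1) * extR (expPi (Fin.tail ω - ν)) j : ℝ) : ℂ) ^ (β / 2)) =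
      cexp (β / 2 * (2 * (∑ j, ω j - ω 0) - (∑ j, ξ j - ξ 0) - ∑ j, ν j : ℝ) -
        (giventalExponent ω ν : ℝ)) := by
  have hsum : 2 * (∑ j, ω j - ω 0) - (∑ j, ξ j - ξ 0) - ∑ j, ν j =
      ∑ j : Fin n, (2 * ω j.succ - ξ j.succ - ν j) := by
    simp only [Fin.sum_univ_succ, add_sub_cancel_left, Finset.sum_sub_distrib, Finset.mul_sum]
  rw [Finset.prod_range, giventalExponent, hsum, ofReal_sum, ofReal_sum, Finset.mul_sum,
    ← Finset.sum_sub_distrib, Complex.exp_sum]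
  refine Finset.prod_congr rfl fun j _ => ?_
  have hξ : extR0 ξ (j + 1) = ξ j.succ := extR0_val ξ j.succ
  have hξ' : extR0 ξ j = ξ j.castSucc := extR0_val ξ j.castSucc
  rw [pi_mul_rootCoord, extR_val, extR_val_succ, extR_val_castSucc, hξ, hξ']
  simp only [expPi, Pi.sub_apply, Fin.tail, ← Real.exp_sub, ← Real.exp_add]
  rw [← Real.exp_nat_mul, neg_mul, neg_mul, ← Real.exp_add, ← Real.exp_add, one_div,
    ← Real.exp_neg, ofReal_exp_cpow, ← Complex.exp_add, neg_sub,
    show ((2 : ℕ) : ℝ) * ((ξ j.castSucc - ξ j.succ) / 2) +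
      (ω j.castSucc - ξ j.castSucc - (ω j.succ - ξ j.succ)) + (ω j.succ - ν j) =
      ω j.castSucc - ν j by push_cast; ring]
  congr 1
  push_cast
  ring

lemma whittBr_rescaled_rootCoord (n : ℕ) (b : ℕ → ℂ) (ξ ω : Fin (n + 2) → ℝ)
    (ν : Fin (n + 1) → ℝ) :
    WhittBr (n + 1) b (fun j =>
      if j < n then rootCoord (extR0 ξ) (j + 1) *
        Real.sqrt (extR (expPi (ω - ξ)) (j + 1) * extR (expPi (Fin.tail ω - ν)) (j + 1) /
          (extR (expPi (ω - ξ)) (j + 2) * extR (expPi (Fin.tail ω - ν)) j))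
      else rootCoord (extR0 ξ) (n + 1) *
        Real.sqrt (extR (expPi (ω - ξ)) (n + 1) / extR (expPi (Fin.tail ω - ν)) n)) =
      whittB (n + 1) b ν := by
  refine whittBr_congr _ _ fun j hj => ?_
  simp only [extR_expPi, ← Real.exp_add, ← Real.exp_sub, rootCoord_mul_sqrt_exp]
  have hξ : ∀ i : Fin (n + 2), extR0 (ω - ξ) i = ω i - extR0 ξ i := fun i => by simp
  have hν : ∀ i : Fin (n + 1), extR0 (Fin.tail ω - ν) i = ω i.succ - extR0 ν i := fun i => by
    simp [Fin.tail]
  split_ifs with h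
  · have hξ₁ := hξ ⟨j + 1, by omega⟩
    have hξ₂ := hξ ⟨j + 2, by omega⟩
    have hν₀ := hν ⟨j, by omega⟩
    have hν₁ := hν ⟨j + 1, by omega⟩
    simp only [Fin.succ_mk] at hξ₁ hξ₂ hν₀ hν₁
    rw [hξ₁, hξ₂, hν₀, hν₁, rootCoord]
    ring_nf
  · obtain rfl : j = n := by omega
    have hξ₁ := hξ (Fin.last _)
    have hν₀ := hν (Fin.last _)
    simp only [Fin.val_last, Fin.succ_last] at hξ₁ hν₀
    rw [hξ₁, hν₀, rootCoord, extR0_self, extR0_self]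
    ring_nf

lemma whittB_succ (n : ℕ) (b : ℕ → ℂ) (ξ : Fin (n + 2) → ℝ) :
    whittB (n + 2) b ξ = ∫ p : (Fin (n + 2) → ℝ) × (Fin (n + 1) → ℝ),
      baxterKernel (-(b (n + 1) / 2)) ξ p.1 *
        (baxterKernel (b (n + 1) / 2) p.1 (appendZero p.2) * whittB (n + 1) b p.2) := by
  rw [whittB, WhittBr, setIntegral_posSet_prod_mul_inv_prod,
    ← (measurePreserving_shearEquiv ξ).integral_comp']
  refine integral_congr_ae (.of_forall fun ⟨ω, ν⟩ => ?_)
  have hzero : extR (expPi (ω - ξ)) 0 = Real.exp (ω 0 - ξ 0) := extR_val (expPi (ω - ξ)) 0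
  have hexponent := congrArg ((↑) : ℝ → ℂ) (baxterExponent_add_exp_last ξ ω)
  have hexponent' := congrArg ((↑) : ℝ → ℂ) (baxterExponent_appendZero ω ν)
  simp only [show shearEquiv ξ (ω, ν) = (ω - ξ, Fin.tail ω - ν) from rfl]
  rw [whittBr_rescaled_rootCoord, prod_whittBr_kernel_left, prod_whittBr_kernel_right, hzero,
    ofReal_exp_cpow, ← mul_assoc (baxterKernel _ _ _), mul_assoc, mul_assoc, ← Complex.exp_add,
    ← Complex.exp_add, mul_comm, baxterKernel, baxterKernel, ← Complex.exp_add, sum_appendZero]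
  congr 2
  push_cast at hexponent hexponent' ⊢
  linear_combination hexponent + hexponent'

lemma whittB_one (b : ℕ → ℂ) (ξ : Fin 1 → ℝ) :
    whittB 1 b ξ = ∫ x : ℝ, cexp (b 0 / 2 * x -
      (Real.exp (ξ 0 / 2 - x) + Real.exp (x - -(ξ 0 / 2)) : ℝ)) := by
  have hroot : Real.pi * rootCoord (extR0 ξ) 0 = Real.exp (ξ 0 / 2) := by
    rw [pi_mul_rootCoord, show extR0 ξ 0 = ξ 0 from extR0_val ξ 0,
      show extR0 ξ (0 + 1) = 0 from extR0_self ξ, sub_zero]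
  rw [whittB, WhittBr, besselK_eq, mul_assoc 2 Real.pi, hroot, ← mul_assoc,
    mul_one_div_cancel two_ne_zero, one_mul]
  refine integral_congr_ae (.of_forall fun x => ?_)
  dsimp only
  rw [mul_div_cancel_left₀ _ two_ne_zero, mul_add, ← Real.exp_add, ← Real.exp_add, sub_neg_eq_add,
    ← sub_eq_add_neg, add_comm x, add_comm (Real.exp (_ + _))]

@[fun_prop]
lemma measurable_whittB (n : ℕ) (b : ℕ → ℂ) : Measurable (whittB (n + 1) b) := by
  induction n with
  | zero =>
    have hker : Measurable fun p : (Fin 1 → ℝ) × ℝ => cexp (b 0 / 2 * p.2 -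
        (Real.exp (p.1 0 / 2 - p.2) + Real.exp (p.2 - -(p.1 0 / 2)) : ℝ)) := by fun_prop
    rw [show whittB (0 + 1) b = _ from funext (whittB_one b)]
    exact hker.stronglyMeasurable.integral_prod_right'.measurable
  | succ n ih =>
    have hker : Measurable fun q : (Fin (n + 2) → ℝ) × (Fin (n + 2) → ℝ) × (Fin (n + 1) → ℝ) =>
        baxterKernel (-(b (n + 1) / 2)) q.1 q.2.1 *
          (baxterKernel (b (n + 1) / 2) q.2.1 (appendZero q.2.2) * whittB (n + 1) b q.2.2) := by
      fun_prop
    rw [show whittB (n + 1 + 1) b = _ from funext (whittB_succ n b)]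
    exact hker.stronglyMeasurable.integral_prod_right'.measurable

end WhittB

section WhittBBound

lemma enorm_baxterKernel_mul_baxterKernel_appendZero {n : ℕ} {β : ℂ} (hβ : β.re = 0)
    (ξ ω : Fin (n + 1) → ℝ) (ν : Fin n → ℝ) :
    ‖baxterKernel (-(β / 2)) ξ ω * baxterKernel (β / 2) ω (appendZero ν)‖ₑ = ENNReal.ofReal
      (Real.exp (-giventalExponent (appendZero ξ) ω - giventalExponent ω ν)) := by
  have hβ₂ : (β / 2).re = 0 := by rw [Complex.div_ofNat_re, hβ, zero_div]
  rw [baxterKernel, baxterKernel, ← Complex.exp_add, enorm_cexp, ← baxterExponent_add_exp_last,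
    baxterExponent_appendZero]
  simp only [Complex.add_re, Complex.sub_re, Complex.re_mul_ofReal, Complex.neg_re, hβ₂,
    Complex.ofReal_re]
  ring_nf

lemma exists_lintegral_lintegral_exp_sub_giventalExponent_le (n : ℕ) {κ : ℝ} (hκ : 0 < κ) :
    ∃ C : ENNReal, C ≠ ⊤ ∧ ∀ ξ : Fin (n + 2) → ℝ,
      ∫⁻ p : (Fin (n + 2) → ℝ) × (Fin (n + 1) → ℝ), ENNReal.ofReal (Real.exp
          (-giventalExponent (appendZero ξ) p.1 - giventalExponent p.1 p.2 - κ * p.2 0)) ≤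
        C * ENNReal.ofReal (Real.exp (-(3 * κ * ξ 0))) := by
  obtain ⟨D, hD, hDle⟩ := exists_lintegral_exp_sub_giventalExponent_le (n := n)
    (e := fun _ => κ) (fun _ => hκ) le_rfl hκ.le
  obtain ⟨E, hE, hEle⟩ := exists_lintegral_exp_sub_giventalExponent_le (n := n + 1)
    (e := fun _ => κ) (fun _ => hκ) hκ.le (by positivity : 0 ≤ 2 * κ)
  refine ⟨D * E, ENNReal.mul_ne_top hD hE, fun ξ => ?_⟩
  calc ∫⁻ p : (Fin (n + 2) → ℝ) × (Fin (n + 1) → ℝ), ENNReal.ofReal (Real.exp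
          (-giventalExponent (appendZero ξ) p.1 - giventalExponent p.1 p.2 - κ * p.2 0))
      = ∫⁻ ω : Fin (n + 2) → ℝ,
          ENNReal.ofReal (Real.exp (-giventalExponent (appendZero ξ) ω)) *
            ∫⁻ ν : Fin (n + 1) → ℝ, ENNReal.ofReal (Real.exp
              (0 * ν (Fin.last n) - κ * ν 0 - giventalExponent ω ν)) := by
        rw [Measure.volume_eq_prod, lintegral_prod _ (by unfold giventalExponent; fun_prop)]
        refine lintegral_congr fun ω => ?_
        rw [← lintegral_const_mul' _ _ ENNReal.ofReal_ne_top]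
        refine lintegral_congr fun ν => ?_
        rw [← ENNReal.ofReal_mul (Real.exp_nonneg _), ← Real.exp_add]
        ring_nf
    _ ≤ ∫⁻ ω : Fin (n + 2) → ℝ, D * ENNReal.ofReal (Real.exp
          (κ * ω (Fin.last _) - 2 * κ * ω 0 - giventalExponent (appendZero ξ) ω)) := by
        refine lintegral_mono fun ω => (mul_le_mul_right (hDle ω) _).trans (le_of_eq ?_)
        rw [mul_left_comm, ← ENNReal.ofReal_mul (Real.exp_nonneg _), ← Real.exp_add,
          ← Finset.mul_sum, sum_succ_sub_castSucc]
        ring_nf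
    _ ≤ D * (E * ENNReal.ofReal (Real.exp
          (∑ j : Fin (n + 2), κ * (appendZero ξ j.succ - appendZero ξ j.castSucc) +
            (κ * appendZero ξ (Fin.last (n + 2)) - 2 * κ * appendZero ξ 0)))) :=
        (lintegral_const_mul' _ _ hD).trans_le (mul_le_mul_right (hEle (appendZero ξ)) _)
    _ = D * E * ENNReal.ofReal (Real.exp (-(3 * κ * ξ 0))) := by
        have hzero : appendZero ξ 0 = ξ 0 := appendZero_castSucc ξ 0
        rw [← Finset.mul_sum, sum_succ_sub_castSucc, appendZero_last, hzero, ← mul_assoc]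
        ring_nf

lemma exists_enorm_whittB_one_le {b : ℕ → ℂ} (hb : (b 0).re = 0) {ε : ℝ} (hε : 0 < ε) :
    ∃ C : ENNReal, C ≠ ⊤ ∧ ∀ ξ : Fin 1 → ℝ,
      ‖whittB 1 b ξ‖ₑ ≤ C * ENNReal.ofReal (Real.exp (-(ε * ξ 0))) := by
  obtain ⟨C, hC, hle⟩ := exists_lintegral_bessel_le (δ := 0) hε hε
  refine ⟨C, hC, fun ξ => ?_⟩
  rw [whittB_one]
  refine (enorm_integral_le_lintegral_enorm _).trans ((lintegral_congr fun x => ?_).trans_le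
    ((hle (ξ 0 / 2) (-(ξ 0 / 2))).trans_eq ?_))
  · rw [enorm_cexp]
    congr 2
    rw [Complex.sub_re, Complex.re_mul_ofReal, Complex.ofReal_re, Complex.div_ofNat_re, hb]
    ring
  · congr 3
    ring

lemma exists_enorm_whittB_le (n : ℕ) {b : ℕ → ℂ} (hb : ∀ k < n + 1, (b k).re = 0) {ε : ℝ}
    (hε : 0 < ε) : ∃ C : ENNReal, C ≠ ⊤ ∧ ∀ ξ : Fin (n + 1) → ℝ,
      ‖whittB (n + 1) b ξ‖ₑ ≤ C * ENNReal.ofReal (Real.exp (-(ε * ξ 0))) := by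
  induction n generalizing ε with
  | zero => exact exists_enorm_whittB_one_le (hb 0 one_pos) hε
  | succ n ih =>
    obtain ⟨C, hC, hCle⟩ := ih (fun k hk => hb k (by omega)) (by positivity : 0 < ε / 3)
    obtain ⟨D, hD, hDle⟩ := exists_lintegral_lintegral_exp_sub_giventalExponent_le n
      (by positivity : 0 < ε / 3)
    refine ⟨C * D, ENNReal.mul_ne_top hC hD, fun ξ => ?_⟩
    calc ‖whittB (n + 2) b ξ‖ₑ
        ≤ ∫⁻ p : (Fin (n + 2) → ℝ) × (Fin (n + 1) → ℝ), C * ENNReal.ofReal (Real.exp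
            (-giventalExponent (appendZero ξ) p.1 - giventalExponent p.1 p.2 -
              ε / 3 * p.2 0)) := by
          rw [whittB_succ]
          refine (enorm_integral_le_lintegral_enorm _).trans (lintegral_mono fun p => ?_)
          dsimp only
          rw [← mul_assoc, enorm_mul,
            enorm_baxterKernel_mul_baxterKernel_appendZero (hb (n + 1) (by omega))]
          refine (mul_le_mul_right (hCle p.2) _).trans (le_of_eq ?_)
          rw [mul_left_comm, ← ENNReal.ofReal_mul (Real.exp_nonneg _), ← Real.exp_add,
            ← sub_eq_add_neg]
      _ ≤ C * (D * ENNReal.ofReal (Real.exp (-(3 * (ε / 3) * ξ 0)))) := by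
          rw [lintegral_const_mul' _ _ hC]
          gcongr
          exact hDle ξ
      _ = C * D * ENNReal.ofReal (Real.exp (-(ε * ξ 0))) := by
          rw [mul_div_cancel₀ _ three_ne_zero, mul_assoc]

end WhittBBound

section Convergence

lemma sum_range_succ_mul_sub_succ (M : ℕ) (X : ℕ → ℝ) :
    ∑ j ∈ Finset.range M, ((j : ℝ) + 1) * (X j - X (j + 1)) =
      ∑ j ∈ Finset.range M, X j - M * X M := by
  induction M with
  | zero => simp
  | succ M ih =>
    rw [Finset.sum_range_succ, ih, Finset.sum_range_succ]
    push_cast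
    ring

lemma sum_succ_mul_appendZero_castSucc_sub_succ {k : ℕ} (ν : Fin k → ℝ) :
    ∑ j : Fin k, ((j : ℝ) + 1) * (appendZero ν j.castSucc - appendZero ν j.succ) = ∑ j, ν j := by
  simpa [Finset.sum_range, appendZero_eq_extR0] using sum_range_succ_mul_sub_succ k (extR0 ν)

lemma sum_abs_le_mul_sum_abs_appendZero_castSucc_sub_succ {k : ℕ} (ν : Fin k → ℝ) :
    ∑ i, |ν i| ≤ k * ∑ j : Fin k, |appendZero ν j.castSucc - appendZero ν j.succ| := by
  have hle : ∀ i, |ν i| ≤ ∑ j : Fin k, |appendZero ν j.castSucc - appendZero ν j.succ| := fun i =>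
    calc |ν i| = dist (extR0 ν i) (extR0 ν k) := by simp
      _ ≤ ∑ j ∈ Finset.Ico (i : ℕ) k, dist (extR0 ν j) (extR0 ν (j + 1)) :=
          dist_le_Ico_sum_dist _ i.2.le
      _ ≤ ∑ j ∈ Finset.range k, dist (extR0 ν j) (extR0 ν (j + 1)) :=
          Finset.sum_le_sum_of_subset_of_nonneg
            (fun j hj => Finset.mem_range.2 (Finset.mem_Ico.1 hj).2) fun _ _ _ => dist_nonneg
      _ = ∑ j : Fin k, |appendZero ν j.castSucc - appendZero ν j.succ| := by
          simp [Finset.sum_range, appendZero_eq_extR0, Real.dist_eq]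
  simpa using Finset.sum_le_card_nsmul Finset.univ _ _ fun i _ => hle i

lemma lintegral_exp_neg_mul_abs_lt_top {c : ℝ} (hc : 0 < c) :
    ∫⁻ x : ℝ, ENNReal.ofReal (Real.exp (-(c * |x|))) < ⊤ := by
  have hIic : IntegrableOn (fun x => Real.exp (-(c * |x|))) (Set.Iic 0) :=
    (integrableOn_exp_mul_Iic hc 0).congr_fun
      (fun x hx => by simp [abs_of_nonpos (Set.mem_Iic.1 hx)]) measurableSet_Iic
  have hIoi : IntegrableOn (fun x => Real.exp (-(c * |x|))) (Set.Ioi 0) :=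
    (exp_neg_integrableOn_Ioi 0 hc).congr_fun
      (fun x hx => by simp [abs_of_pos (Set.mem_Ioi.1 hx)]) measurableSet_Ioi
  rw [← setLIntegral_univ, ← Set.Iic_union_Ioi (a := (0 : ℝ))]
  exact (hIic.union hIoi).lintegral_lt_top

lemma exists_whittAMajorant_le_exp_neg_sum (n : ℕ) {a : ℕ → ℂ}
    (ha : ∀ j < n + 1, (a j).re = 0) {c : ℝ} {t : Fin n → ℝ} (ht : ∀ j, |c| < t j) :
    ∃ C : ENNReal, C ≠ ⊤ ∧ ∀ ξ, whittAMajorant n a ξ ≤ C * ENNReal.ofReal (Real.exp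
      (-∑ j, (t j * (ξ j.castSucc - ξ j.succ) + c * |ξ j.castSucc - ξ j.succ|))) := by
  classical
  let e : Finset (Fin n) → Fin n → ℝ := fun S j => if j ∈ S then t j + c else t j - c
  have he : ∀ S j, 0 < e S j := fun S j => by
    have := abs_lt.1 (ht j)
    dsimp only [e]
    split_ifs <;> linarith
  choose C hC hle using fun S => exists_whittAMajorant_le n ha (he S)
  refine ⟨∑ S, C S, ENNReal.sum_ne_top.2 fun S _ => hC S, fun ξ => ?_⟩
  let S : Finset (Fin n) := Finset.univ.filter fun j => 0 ≤ ξ j.castSucc - ξ j.succ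
  have hS : ∑ j, e S j * (ξ j.succ - ξ j.castSucc) =
      -∑ j, (t j * (ξ j.castSucc - ξ j.succ) + c * |ξ j.castSucc - ξ j.succ|) := by
    rw [← Finset.sum_neg_distrib]
    refine Finset.sum_congr rfl fun j _ => ?_
    by_cases hj : 0 ≤ ξ j.castSucc - ξ j.succ
    · rw [show e S j = t j + c from if_pos (by simpa [S] using hj), abs_of_nonneg hj]
      ring
    · rw [show e S j = t j - c from if_neg (by simpa [S] using hj), abs_of_neg (not_le.1 hj)]
      ring
  rw [← hS]
  exact (hle S ξ).trans (mul_le_mul_left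
    (Finset.single_le_sum (fun _ _ => zero_le) (Finset.mem_univ S)) _)

lemma exists_exp_mul_enorm_whittB_mul_whittAMajorant_le (n : ℕ) {a b : ℕ → ℂ}
    (ha : ∀ j < n + 2, (a j).re = 0) (hb : ∀ k < n + 1, (b k).re = 0) {σ : ℝ} (hσ : 0 < σ) :
    ∃ C : ENNReal, C ≠ ⊤ ∧ ∃ c > 0, ∀ ν : Fin (n + 1) → ℝ,
      ENNReal.ofReal (Real.exp (σ * ∑ j, ν j)) * ‖whittB (n + 1) b ν‖ₑ *
          whittAMajorant (n + 1) a (appendZero ν) ≤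
        C * ENNReal.ofReal (Real.exp (-(c * ∑ j, |ν j|))) := by
  obtain ⟨B, hB, hBle⟩ := exists_enorm_whittB_le n hb (by positivity : 0 < σ / 4)
  have ht : ∀ j : Fin (n + 1), |σ / 2| < σ * ((j : ℝ) + 1) - σ / 4 := fun j => by
    rw [abs_of_pos (half_pos hσ)]
    nlinarith [mul_nonneg hσ.le (Nat.cast_nonneg (α := ℝ) (j : ℕ))]
  obtain ⟨A, hA, hAle⟩ := exists_whittAMajorant_le_exp_neg_sum (n + 1) ha ht
  refine ⟨B * A, ENNReal.mul_ne_top hB hA, σ / 2 / (n + 1 : ℕ), by positivity, fun ν => ?_⟩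
  let r : Fin (n + 1) → ℝ := fun j => appendZero ν j.castSucc - appendZero ν j.succ
  have hsum : σ * ∑ j, ν j + (-(σ / 4 * ν 0) +
      -∑ j : Fin (n + 1), ((σ * ((j : ℝ) + 1) - σ / 4) * r j + σ / 2 * |r j|)) =
      -(σ / 2 * ∑ j, |r j|) := by
    rw [← sum_succ_mul_appendZero_castSucc_sub_succ ν, ← sum_appendZero_castSucc_sub_succ ν]
    simp only [Finset.mul_sum, ← Finset.sum_neg_distrib, ← Finset.sum_add_distrib]
    exact Finset.sum_congr rfl fun j _ => by ring
  calc ENNReal.ofReal (Real.exp (σ * ∑ j, ν j)) * ‖whittB (n + 1) b ν‖ₑ *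
          whittAMajorant (n + 1) a (appendZero ν)
      ≤ B * A * ENNReal.ofReal (Real.exp (-(σ / 2 * ∑ j, |r j|))) := by
        rw [← hsum, Real.exp_add, Real.exp_add, ENNReal.ofReal_mul (Real.exp_nonneg _),
          ENNReal.ofReal_mul (Real.exp_nonneg _), mul_left_comm, mul_mul_mul_comm, ← mul_assoc]
        gcongr
        exacts [hBle ν, hAle _]
    _ ≤ B * A * ENNReal.ofReal (Real.exp (-(σ / 2 / (n + 1 : ℕ) * ∑ j, |ν j|))) := by
        refine mul_le_mul_right (ENNReal.ofReal_le_ofReal (Real.exp_le_exp.2 (neg_le_neg ?_))) _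
        rw [div_mul_eq_mul_div, div_le_iff₀ (by positivity), mul_assoc, mul_comm (∑ j, |r j|)]
        exact mul_le_mul_of_nonneg_left
          (sum_abs_le_mul_sum_abs_appendZero_castSucc_sub_succ ν) (half_pos hσ).le

lemma lintegral_exp_mul_enorm_whittB_mul_whittAMajorant_lt_top (n : ℕ) {a b : ℕ → ℂ}
    (ha : ∀ j < n + 2, (a j).re = 0) (hb : ∀ k < n + 1, (b k).re = 0) {σ : ℝ} (hσ : 0 < σ) :
    ∫⁻ ν : Fin (n + 1) → ℝ, ENNReal.ofReal (Real.exp (σ * ∑ j, ν j)) *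
      ‖whittB (n + 1) b ν‖ₑ * whittAMajorant (n + 1) a (appendZero ν) < ⊤ := by
  obtain ⟨C, hC, c, hc, hle⟩ := exists_exp_mul_enorm_whittB_mul_whittAMajorant_le n ha hb hσ
  refine (lintegral_mono hle).trans_lt ?_
  simp only [Finset.mul_sum, ← Finset.sum_neg_distrib, Real.exp_sum,
    ENNReal.ofReal_prod_of_nonneg fun _ _ => Real.exp_nonneg _]
  rw [lintegral_const_mul' _ _ hC,
    lintegral_fin_prod (fun _ x => ENNReal.ofReal (Real.exp (-(c * |x|)))) fun _ => by fun_prop]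
  exact ENNReal.mul_lt_top hC.lt_top
    (ENNReal.prod_lt_top fun _ _ => lintegral_exp_neg_mul_abs_lt_top hc)

end Convergence

section MainIntegral

lemma cexp_mul_sum_mul_baxterKernel {n : ℕ} (c d : ℂ) (ξ ω : Fin (n + 1) → ℝ) :
    cexp (d * (∑ j, ξ j : ℝ)) * baxterKernel c ξ ω =
      baxterKernel (c + d) ξ ω * cexp (d * (∑ j, ω j : ℝ)) := by
  rw [baxterKernel, baxterKernel, ← Complex.exp_add, ← Complex.exp_add]
  congr 1
  push_cast
  ring

lemma integral_whittA_mul_whittB_succ (n : ℕ) {a b : ℕ → ℂ} (ha : ∀ j < n + 2, (a j).re = 0)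
    (hb : ∀ k < n + 2, (b k).re = 0) {s : ℂ} (hs : 0 < s.re) :
    ∫ ξ : Fin (n + 2) → ℝ,
        whittA (n + 1) a ξ * (cexp (s / 2 * (∑ j, ξ j : ℝ)) * whittB (n + 2) b ξ) =
      (∏ j ∈ Finset.range (n + 2), Complex.Gamma ((s - b (n + 1)) / 2 + a j)) *
        ((∏ j ∈ Finset.range (n + 2), Complex.Gamma ((s + b (n + 1)) / 2 + a j)) *
          ∫ ν : Fin (n + 1) → ℝ, whittA (n + 1) a (appendZero ν) *
            (cexp (s / 2 * (∑ j, ν j : ℝ)) * whittB (n + 1) b ν)) := by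
  have hβ := hb (n + 1) (by omega)
  have hσ : 0 < s.re / 2 := half_pos hs
  have hfin : ∫⁻ ν : Fin (n + 1) → ℝ, ‖cexp (s / 2 * (∑ j, ν j : ℝ)) * whittB (n + 1) b ν‖ₑ *
      whittAMajorant (n + 1) a (appendZero ν) < ⊤ := by
    simpa only [enorm_mul, enorm_cexp, Complex.re_mul_ofReal, Complex.div_ofNat_re] using
      lintegral_exp_mul_enorm_whittB_mul_whittAMajorant_lt_top n ha
        (fun k hk => hb k (by omega)) hσ
  rw [← integral_whittA_mul_integral_baxterKernel_mul_baxterKernel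
    (by simpa [hβ] using hs) (by simpa [hβ] using hs) ha measurable_appendZero
    (by fun_prop) hfin]
  refine integral_congr_ae (.of_forall fun ξ => congrArg (whittA (n + 1) a ξ * ·) ?_)
  rw [whittB_succ, ← integral_const_mul]
  refine integral_congr_ae (.of_forall fun p => ?_)
  change cexp _ * (baxterKernel _ ξ p.1 * _) = _
  rw [← mul_assoc, cexp_mul_sum_mul_baxterKernel, mul_assoc, ← mul_assoc (cexp _),
    cexp_mul_sum_mul_baxterKernel, sum_appendZero, mul_assoc]
  congr 2
  · ring
  · congr 1
    ring

end MainIntegral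

section RadialWhittA

lemma cexp_mul_cpow_mul_cpow (x τ : ℝ) (p q : ℂ) :
    cexp ((-(Real.exp (x / 2)) ^ 2 * Real.exp τ - 1 / Real.exp τ : ℝ) : ℂ) *
        ((Real.exp (x / 2) : ℝ) : ℂ) ^ p * ((Real.exp τ : ℝ) : ℂ) ^ q =
      cexp (p / 2 * x + q * τ - (Real.exp (x + τ) + Real.exp (-τ) : ℝ)) := by
  rw [neg_exp_half_sq_mul_exp_sub, ofReal_exp_cpow, ofReal_exp_cpow, ← Complex.exp_add,
    ← Complex.exp_add]
  congr 1
  push_cast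
  ring

lemma sum_range_sub_mul_sub_succ (N : ℕ) (X : ℕ → ℝ) :
    ∑ j ∈ Finset.range N, ((N - j : ℕ) : ℝ) * (X j - X (j + 1)) =
      (N + 1) * X 0 - ∑ j ∈ Finset.range (N + 1), X j := by
  have hcoeff : ∀ j ∈ Finset.range N, ((N - j : ℕ) : ℝ) * (X j - X (j + 1)) =
      (N + 1) * (X j - X (j + 1)) - ((j : ℝ) + 1) * (X j - X (j + 1)) := fun j hj => by
    rw [Nat.cast_sub (Finset.mem_range.1 hj).le]
    ring
  rw [Finset.sum_congr rfl hcoeff, Finset.sum_sub_distrib, ← Finset.mul_sum,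
    Finset.sum_range_sub', sum_range_succ_mul_sub_succ, Finset.sum_range_succ]
  ring

lemma sum_sub_mul_sub_succ_add {N : ℕ} (X : ℕ → ℝ) (τ : Fin N → ℝ) :
    ∑ j : Fin N, (((N - j : ℕ) : ℝ) * (X j - X (j + 1)) + (N + 1) * τ j) =
      N * (∑ j : Fin (N + 1), X j - ∑ j : Fin N, (X (j + 1) - τ j)) -
        ∑ j : Fin N, (X (j + 1) - τ j) := by
  have hsum := sum_range_sub_mul_sub_succ N X
  rw [Finset.sum_range, Finset.sum_range] at hsum
  rw [Finset.sum_add_distrib, hsum]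
  simp only [Finset.sum_sub_distrib, ← Finset.mul_sum, Fin.sum_univ_succ, Fin.val_zero,
    Fin.val_succ]
  ring

lemma prod_whittAr_kernel (n : ℕ) (α : ℂ) (X : ℕ → ℝ) (τ : Fin (n + 1) → ℝ) :
    ∏ j ∈ Finset.range (n + 1),
      (cexp (((-(Real.pi * rootCoord X j) ^ 2 * extR (expPi τ) j - 1 / extR (expPi τ) j : ℝ) : ℂ)) *
        ((Real.pi * rootCoord X j : ℝ) : ℂ) ^ ((((n + 1 - j : ℕ) : ℂ) * α) / ((n + 1 : ℕ) : ℂ)) *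
        ((extR (expPi τ) j : ℝ) : ℂ) ^ ((((n + 2 : ℕ) : ℂ) * α) / (2 * ((n + 1 : ℕ) : ℂ)))) =
      giventalKernel (α / 2) (fun j : Fin (n + 2) => X j) (fun j => X (j + 1) - τ j) *
        cexp (-(α / 2 / (n + 1 : ℕ) * (∑ j : Fin (n + 1), (X (j + 1) - τ j) : ℝ))) := by
  have hn : ((n : ℂ) + 1) ≠ 0 := n.cast_add_one_ne_zero
  have hsum := congrArg (fun x : ℝ => α / (2 * (n + 1 : ℕ)) * (x : ℂ))
    (sum_sub_mul_sub_succ_add X τ)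
  have hexp : giventalExponent (fun j : Fin (n + 2) => X j) (fun j => X (j + 1) - τ j) =
      ∑ j : Fin (n + 1), (Real.exp (X j - X (j + 1) + τ j) + Real.exp (-τ j)) :=
    Finset.sum_congr rfl fun j _ => by
      simp only [Fin.val_castSucc, Fin.val_succ]
      ring_nf
  rw [Finset.prod_range, giventalKernel, hexp, ← Complex.exp_add]
  simp only [pi_mul_rootCoord, extR_val, expPi, cexp_mul_cpow_mul_cpow]
  rw [← Complex.exp_sum, Finset.sum_sub_distrib, ← ofReal_sum, sub_add_eq_add_sub]
  congr 2
  refine Eq.trans ?_ (hsum.trans ?_)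
  · rw [ofReal_sum, Finset.mul_sum]
    refine Finset.sum_congr rfl fun j _ => ?_
    push_cast
    field_simp
    ring
  · push_cast
    field_simp
    ring

lemma rootCoord_succ_mul_sqrt {n : ℕ} (X : ℕ → ℝ) (τ : Fin n → ℝ) :
    (fun j => rootCoord X (j + 1) * Real.sqrt (extR (expPi τ) (j + 1) / extR (expPi τ) j)) =
      rootCoord fun j => X (j + 1) - extR0 τ j := by
  ext j
  rw [extR_expPi, ← Real.exp_sub, rootCoord_mul_sqrt_exp, rootCoord]
  ring_nf

lemma sumA_tildeA (n : ℕ) (a : ℕ → ℂ) : sumA (n + 1) (tildeA (n + 2) a) = sumA (n + 2) a := by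
  have hn : ((n : ℂ) + 1) ≠ 0 := n.cast_add_one_ne_zero
  simp only [sumA, tildeA, Finset.sum_add_distrib, Finset.sum_const, Finset.card_range]
  rw [Finset.sum_range_succ' a (n + 1), show ((n + 2 : ℕ) : ℂ) - 1 = n + 1 by push_cast; ring]
  simp [mul_div_cancel₀ _ hn]

lemma whittA_tildeA (n : ℕ) (a : ℕ → ℂ) (ω : Fin (n + 1) → ℝ) :
    whittA n (fun j => tildeA (n + 2) a j / 2) ω =
      cexp (a 0 / 2 / (n + 1 : ℕ) * (∑ j, ω j : ℝ)) * whittA n (fun j => a (j + 1) / 2) ω := by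
  rw [← whittA_add_const]
  congr 1
  ext j
  simp only [tildeA]
  push_cast
  ring

lemma whittAr_two_rootCoord (a : ℕ → ℂ) (X : ℕ → ℝ) :
    WhittAr 2 a (rootCoord X) = cexp (-(sumA 2 a / 2 * (Real.log Real.pi + X 1 : ℝ))) *
      whittA 1 (fun j => a j / 2) (fun j => X j) := by
  have hwhittA : whittA 1 (fun j => a j / 2) (fun j => X j) = ∫ x : ℝ,
      cexp (a 0 / 2 * ((X 0 + X 1 - x : ℝ) : ℂ) -
        (Real.exp (X 0 - x) + Real.exp (x - X 1) : ℝ)) * cexp (a 1 / 2 * (x : ℂ)) := by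
    rw [← integral_fin_one]
    simp [whittA, giventalKernel, giventalExponent, Fin.sum_univ_succ]
  rw [hwhittA, ← integral_sub_left_eq_self (fun x : ℝ => cexp _ * _) volume ((X 0 + X 1) / 2)]
  simp only [WhittAr, besselK_eq, mul_assoc 2 Real.pi, pi_mul_rootCoord, rootCoord_cpow,
    ← integral_const_mul]
  congr with x
  rw [show X 0 - ((X 0 + X 1) / 2 - x) = (X 0 - X 1) / 2 + x by ring,
    show (X 0 + X 1) / 2 - x - X 1 = (X 0 - X 1) / 2 + -x by ring, Real.exp_add, Real.exp_add,
    show ∀ A B : ℂ, 2 * A * (1 / 2 * B) = A * B by intros; ring]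
  simp only [← Complex.exp_add, sumA, Finset.sum_range_succ, Finset.range_zero, Finset.sum_empty]
  congr 1
  push_cast
  ring

lemma whittAr_rootCoord (n : ℕ) (a : ℕ → ℂ) (X : ℕ → ℝ) :
    WhittAr (n + 2) a (rootCoord X) =
      cexp (-(sumA (n + 2) a / 2 * ((n + 1 : ℕ) * Real.log Real.pi + X (n + 1) : ℝ))) *
        whittA (n + 1) (fun j => a j / 2) (fun j => X j) := by
  induction n generalizing a X with
  | zero => simpa using whittAr_two_rootCoord a X
  | succ n ih =>
    rw [WhittAr, setIntegral_posSet_mul_inv_prod, whittA, ← integral_const_mul,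
      ← integral_sub_left_eq_self _ volume (fun j : Fin (n + 2) => X (j + 1))]
    refine integral_congr_ae (.of_forall fun ω => ?_)
    let τ : Fin (n + 2) → ℝ := fun j => X (j + 1) - ω j
    have hω : (fun j : Fin (n + 2) => X (j + 1) - extR0 τ j) = ω := by
      simp only [extR0_val, τ, sub_sub_cancel]
    have hlast : X (n + 1 + 1) - extR0 τ (n + 1) = ω (Fin.last (n + 1)) :=
      congrFun hω (Fin.last (n + 1))
    have hpi : Real.pi * extR (expPi τ) (n + 1) =
        Real.exp (Real.log Real.pi + X (n + 2) - ω (Fin.last (n + 1))) := by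
      rw [← hlast, add_sub_assoc, sub_sub_cancel, Real.exp_add, Real.exp_log Real.pi_pos,
        extR_expPi]
    change WhittAr (n + 2) _ (fun j => rootCoord X (j + 1) * Real.sqrt (extR (expPi τ) (j + 1) /
      extR (expPi τ) j)) * _ * (((Real.pi * extR (expPi τ) (n + 1) : ℝ) : ℂ) ^ _) = _
    rw [prod_whittAr_kernel (n + 1), rootCoord_succ_mul_sqrt, ih, hω, hlast, hpi,
      ofReal_exp_cpow, sumA_tildeA, whittA_tildeA]
    simp only [Pi.sub_apply, sub_sub_cancel, Complex.exp_neg (a 0 / 2 / _ * _)]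
    have hregroup : cexp (-(sumA (n + 3) a / 2 *
          ((n + 1 : ℕ) * Real.log Real.pi + ω (Fin.last (n + 1)) : ℝ))) *
        cexp ((Real.log Real.pi + X (n + 2) - ω (Fin.last (n + 1)) : ℝ) *
          (-sumA (n + 3) a / 2)) =
        cexp (-(sumA (n + 3) a / 2 * ((n + 2 : ℕ) * Real.log Real.pi + X (n + 2) : ℝ))) := by
      rw [← Complex.exp_add]
      congr 1
      push_cast
      ring
    rw [← hregroup]
    field_simp [Complex.exp_ne_zero]

end RadialWhittA

section ZetaIntegrals

/-- The extension of `ξ` to `ℕ` by `0` and then by steps of `-2 log π`, chosen so that the root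
coordinates beyond the given range equal `1`, as `extR` requires. -/
def extLog {k : ℕ} (ξ : Fin k → ℝ) (j : ℕ) : ℝ :=
  extR0 ξ j - 2 * ((j - k : ℕ) : ℝ) * Real.log Real.pi

lemma extLog_of_le {k j : ℕ} (ξ : Fin k → ℝ) (hj : j ≤ k) : extLog ξ j = extR0 ξ j := by
  simp [extLog, Nat.sub_eq_zero_of_le hj]

lemma extLog_succ_self {k : ℕ} (ξ : Fin k → ℝ) :
    extLog ξ (k + 1) = -(2 * Real.log Real.pi) := by
  simp [extLog, extR0]

lemma extR_expPi_logRoot {k : ℕ} (ξ : Fin k → ℝ) :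
    extR (expPi (logRoot ξ)) = rootCoord (extLog ξ) := by
  ext j
  rw [rootCoord]
  by_cases hj : j < k
  · rw [extLog_of_le ξ hj.le, extLog_of_le ξ hj, extR, dif_pos hj, expPi, logRoot, Real.exp_sub,
      Real.exp_log Real.pi_pos]
  · have hstep : (extLog ξ j - extLog ξ (j + 1)) / 2 = Real.log Real.pi := by
      simp only [extLog, extR0, hj, mt Nat.lt_of_succ_lt hj, dif_neg, not_false_eq_true,
        Nat.sub_add_comm (not_lt.1 hj)]
      push_cast
      ring
    rw [hstep, Real.exp_log Real.pi_pos, div_self Real.pi_ne_zero, extR, dif_neg hj]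

lemma prod_extR_expPi_logRoot_cpow {k : ℕ} (ξ : Fin k → ℝ) (s : ℂ) :
    ∏ j ∈ Finset.range k, ((extR (expPi (logRoot ξ)) j : ℝ) : ℂ) ^ (((j + 1 : ℕ) : ℂ) * s) =
      cexp (-(Real.log Real.pi * s * ∑ j ∈ Finset.range k, ((j : ℂ) + 1))) *
        cexp (s / 2 * (∑ j, ξ j : ℝ)) := by
  have hsum : ∑ j, ξ j = ∑ j ∈ Finset.range k, ((j : ℝ) + 1) * (extR0 ξ j - extR0 ξ (j + 1)) := by
    rw [sum_range_succ_mul_sub_succ, extR0_self, mul_zero, sub_zero, Finset.sum_range]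
    simp only [extR0_val]
  rw [← Complex.exp_add, hsum, ofReal_sum, Finset.mul_sum, Finset.mul_sum,
    ← Finset.sum_neg_distrib, ← Finset.sum_add_distrib, Complex.exp_sum]
  refine Finset.prod_congr rfl fun j hj => ?_
  have hjk := Finset.mem_range.1 hj
  rw [extR_expPi_logRoot, rootCoord_cpow, extLog_of_le ξ hjk.le, extLog_of_le ξ hjk]
  congr 1
  push_cast
  ring

lemma whittBr_extR_expPi_logRoot {k : ℕ} (b : ℕ → ℂ) (ξ : Fin k → ℝ) :
    WhittBr k b (extR (expPi (logRoot ξ))) = whittB k b ξ :=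
  whittBr_congr k b fun j hj => by
    rw [extR_expPi_logRoot, rootCoord, rootCoord, extLog_of_le ξ hj.le, extLog_of_le ξ hj]

lemma integral_posSet_mul_whittBr (k : ℕ) (b : ℕ → ℂ) (s : ℂ) (W : (ℕ → ℝ) → ℂ) :
    (2 : ℂ) ^ k * ∫ y in posSet k, W (extR y) * WhittBr k b (extR y) *
        ∏ j ∈ Finset.range k,
          ((extR y j : ℝ) : ℂ) ^ (((j + 1 : ℕ) : ℂ) * s) / ((extR y j : ℝ) : ℂ) =
      cexp (-(Real.log Real.pi * s * ∑ j ∈ Finset.range k, ((j : ℂ) + 1))) *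
        ∫ ξ : Fin k → ℝ, W (rootCoord (extLog ξ)) *
          (cexp (s / 2 * (∑ j, ξ j : ℝ)) * whittB k b ξ) := by
  simp only [Finset.prod_div_distrib]
  simp only [div_eq_mul_inv, ← mul_assoc]
  rw [setIntegral_posSet_mul_inv_prod, show (2 : ℂ) ^ k = ((2 : ℝ) ^ k : ℝ) by push_cast; rfl,
    ← real_smul, ← integral_comp_logRoot, ← integral_const_mul]
  congr with ξ
  rw [prod_extR_expPi_logRoot_cpow, whittBr_extR_expPi_logRoot, extR_expPi_logRoot]
  ring_nf

lemma whittAhat_rootCoord (m : ℕ) (a : ℕ → ℂ) (X : ℕ → ℝ) :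
    WhittAhat (m + 2) a (rootCoord X) =
      cexp (-(sumA (m + 2) a / 2 * ((m + 3 : ℕ) * Real.log Real.pi + X (m + 2) : ℝ))) *
        whittA (m + 1) (fun j => a j / 2) fun j => X j := by
  rw [WhittAhat, show m + 2 - 1 = m + 1 from rfl, rootCoord_cpow, whittAr_rootCoord, ← mul_assoc,
    ← Complex.exp_add]
  congr 2
  push_cast
  ring

lemma zetaJ0_eq (m : ℕ) (a b : ℕ → ℂ) (s : ℂ) :
    zetaJ0 (m + 2) a b s =
      cexp (-(Real.log Real.pi * (s * ∑ j ∈ Finset.range (m + 2), ((j : ℂ) + 1) +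
        (m + 3 : ℕ) * (sumA (m + 2) a / 2)))) *
        ∫ ξ : Fin (m + 2) → ℝ, whittA (m + 1) (fun j => a j / 2) ξ *
          (cexp (s / 2 * (∑ j, ξ j : ℝ)) * whittB (m + 2) b ξ) := by
  rw [zetaJ0, integral_posSet_mul_whittBr, mul_add, neg_add, Complex.exp_add,
    mul_assoc (cexp _) (cexp _), mul_assoc _ s]
  congr 1
  rw [← integral_const_mul]
  congr with ξ
  have hξ : (fun j : Fin (m + 2) => extLog ξ j) = ξ :=
    funext fun j => (extLog_of_le ξ j.2.le).trans (extR0_val ξ j)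
  rw [whittAhat_rootCoord, hξ, extLog_of_le ξ le_rfl, extR0_self, add_zero, mul_assoc]
  congr 2
  push_cast
  ring

lemma zetaJ1_eq (m : ℕ) (a b : ℕ → ℂ) (s : ℂ) :
    zetaJ1 (m + 1) a b s =
      cexp (-(Real.log Real.pi * (s * ∑ j ∈ Finset.range (m + 1), ((j : ℂ) + 1) +
        (m + 1 : ℕ) * (sumA (m + 2) a / 2)))) *
        ∫ ν : Fin (m + 1) → ℝ, whittA (m + 1) (fun j => a j / 2) (appendZero ν) *
          (cexp (s / 2 * (∑ j, ν j : ℝ)) * whittB (m + 1) b ν) := by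
  rw [zetaJ1, integral_posSet_mul_whittBr, mul_add, neg_add, Complex.exp_add,
    mul_assoc (cexp _) (cexp _), mul_assoc _ s]
  congr 1
  rw [← integral_const_mul]
  congr with ν
  have hν : (fun j : Fin (m + 2) => extLog ν j) = appendZero ν := funext fun j => by
    rw [extLog_of_le ν (Nat.lt_succ_iff.1 j.2), appendZero_eq_extR0]
  rw [whittAhat_rootCoord, hν, extLog_succ_self, mul_assoc]
  congr 2
  push_cast
  ring

lemma prod_GammaR (n : ℕ) (a : ℕ → ℂ) (s β : ℂ) :
    ∏ j ∈ Finset.range n, GammaR (s + a j + β) * GammaR (s + a j - β) =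
      cexp (-(Real.log Real.pi * (n * s + sumA n a))) *
        ((∏ j ∈ Finset.range n, Complex.Gamma ((s - β) / 2 + a j / 2)) *
          ∏ j ∈ Finset.range n, Complex.Gamma ((s + β) / 2 + a j / 2)) := by
  have hsum : -(Real.log Real.pi * (n * s + sumA n a)) =
      ∑ j ∈ Finset.range n, -(Real.log Real.pi * (s + a j)) := by
    rw [Finset.sum_neg_distrib, ← Finset.mul_sum, Finset.sum_add_distrib, sumA]
    simp
  rw [hsum, Complex.exp_sum, ← Finset.prod_mul_distrib, ← Finset.prod_mul_distrib]
  refine Finset.prod_congr rfl fun j _ => ?_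
  rw [GammaR, GammaR, pi_cpow, pi_cpow, mul_mul_mul_comm, ← Complex.exp_add]
  ring_nf

end ZetaIntegrals

/-- Recursion relating the `SO_{2n+1} × GL_n` and `SO_{2n-1} × GL_n` archimedean
zeta integrals (Proposition 3.1(1) of Ishii–Stade). -/
theorem so_gl_zeta_recursion_one (n : ℕ) (hn : 2 ≤ n)
    (a b : ℕ → ℂ) (ha : ∀ j < n, (a j).re = 0) (hb : ∀ k < n, (b k).re = 0)
    (s : ℂ) (hs : 0 < s.re) :
    zetaJ0 n a b s =
      (∏ j ∈ Finset.range n, GammaR (s + a j + b (n - 1)) * GammaR (s + a j - b (n - 1))) *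
        zetaJ1 (n - 1) a b s := by
  obtain ⟨m, rfl⟩ := Nat.exists_eq_add_of_le' hn
  have ha_half : ∀ j < m + 2, (a j / 2).re = 0 := fun j hj => by
    rw [Complex.div_ofNat_re, ha j hj, zero_div]
  rw [show m + 2 - 1 = m + 1 from rfl, zetaJ0_eq, zetaJ1_eq, prod_GammaR,
    integral_whittA_mul_whittB_succ m ha_half hb hs, ← mul_assoc (∏ j ∈ _, _), mul_mul_mul_comm,
    ← Complex.exp_add]
  congr 2
  rw [Finset.sum_range_succ _ (m + 1)]
  push_cast
  ring

end
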